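/- Fix integers m ≥ 2, w ≥ 2, s ≥ 2w+1, and assume d ≥ 2s−1. Fix distinct lines D, R ⊂ ℙ^m with D ∩ R ≠ ∅; set {O} := D ∩ R and let U be the plane spanned by D ∪ R. Let E ⊂ U be a general subset with #E = s−2w−1. Let A_1 ⊂ D be the zero-dimensional degree-(w+1) subscheme of D supported at O; fix O' ∈ R ∖ {O} and let A_2 ⊂ R be the zero-dimensional degree-w subscheme of R supported at O'. Then there is a point P ∈ ⟨ν_d(A_1 ∪ A_2 ∪ E)⟩ such that br(P) = s and sr(P) = 2d+1+s−4w. -/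

import Mathlib

open scoped LinearAlgebra.Projectivization

noncomputable section

/-- The polynomial ring in `m+1` variables over `K`: homogeneous coordinate ring of `ℙ^m`. -/
abbrev PR (K : Type) [Field K] (m : ℕ) : Type := MvPolynomial (Fin (m+1)) K

/-- The space of degree-`d` forms in `m+1` variables. -/
abbrev Hd (K : Type) [Field K] (m d : ℕ) : Submodule K (PR K m) :=
  MvPolynomial.homogeneousSubmodule (Fin (m+1)) K d

/-- Projective `m`-space over `K`. -/
abbrev Pm (K : Type) [Field K] (m : ℕ) := ℙ K (Fin (m+1) → K)

/-- The target projective space `ℙ^n`, `n = C(m+d,m) - 1`, of the degree-`d` Veronese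
embedding, realized as the projectivization of the dual of the space of degree-`d` forms
(the space of degree-`d` symmetric tensors). -/
abbrev PN (K : Type) [Field K] (m d : ℕ) := ℙ K (Module.Dual K (Hd K m d))

variable {K : Type} [Field K] {m : ℕ}

/-- Hilbert function of `R/I` in degree `t`. -/
def hilbQ (I : Ideal (PR K m)) (t : ℕ) : ℕ :=
  Module.finrank K ((Hd K m t).map (Ideal.Quotient.mkₐ K I).toLinearMap)

/-- The degree (length) of the projective scheme defined by `I`: the eventual value of the
Hilbert function of `R/I`. -/
def idealDeg (I : Ideal (PR K m)) : ℕ := Filter.limsup (fun t => hilbQ I t) Filter.atTop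

/-- `h^1(𝓘_Z(d))` for the zero-dimensional scheme `Z` with (saturated) ideal `I`:
it equals `deg Z - dim (R/I)_d`. -/
def h1I (I : Ideal (PR K m)) (d : ℕ) : ℕ := idealDeg I - hilbQ I d

/-- An ideal is homogeneous. -/
def IsHomogI (I : Ideal (PR K m)) : Prop :=
  ∀ f ∈ I, ∀ n : ℕ, MvPolynomial.homogeneousComponent n f ∈ I

/-- An ideal is saturated with respect to the irrelevant maximal ideal. -/
def IsSatI (I : Ideal (PR K m)) : Prop :=
  ∀ f : PR K m, (∀ i, MvPolynomial.X i * f ∈ I) → f ∈ I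

/-- A closed subscheme of `ℙ^m`, given by its saturated homogeneous ideal. -/
structure PSub (K : Type) [Field K] (m : ℕ) where
  I : Ideal (PR K m)
  homog : IsHomogI I
  sat : IsSatI I

/-- A (closed sub)scheme is zero-dimensional iff the Hilbert function of `R/I` is bounded. -/
def IsZeroDimI (I : Ideal (PR K m)) : Prop := ∃ C, ∀ t, hilbQ I t ≤ C

/-- A polynomial vanishes at a projective point (every homogeneous component vanishes
at a representative). -/
def vanishesAt (f : PR K m) (a : Pm K m) : Prop :=
  ∀ n : ℕ, MvPolynomial.eval a.rep (MvPolynomial.homogeneousComponent n f) = 0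

/-- Zero locus of an ideal in `ℙ^m`. -/
def pzeroLocus (I : Ideal (PR K m)) : Set (Pm K m) := {a | ∀ f ∈ I, vanishesAt f a}

/-- The (saturated) homogeneous ideal of a set of points of `ℙ^m`. -/
def idealOfSet (S : Set (Pm K m)) : Ideal (PR K m) :=
  Ideal.span {f : PR K m | (∃ n, f.IsHomogeneous n) ∧ ∀ a ∈ S, MvPolynomial.eval a.rep f = 0}

/-- Saturation of a homogeneous ideal: the smallest saturated homogeneous ideal containing it. -/
def satIdeal (J : Ideal (PR K m)) : Ideal (PR K m) := sInf {J' | J ≤ J' ∧ IsHomogI J' ∧ IsSatI J'}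

/-- The scheme defined by the (saturated) ideal `I` is reduced. -/
def IsReducedI (I : Ideal (PR K m)) : Prop := I = idealOfSet (pzeroLocus I)

/-- Connected component of a zero-dimensional scheme at a point `a`: the largest subscheme
supported at `a`, i.e. the `a`-primary component. -/
def componentAt (I : Ideal (PR K m)) (a : Pm K m) : Ideal (PR K m) :=
  sInf {J | I ≤ J ∧ IsHomogI J ∧ IsSatI J ∧ pzeroLocus J ⊆ {a}}

/-- Residual scheme of `Z` with respect to the hypersurface `f = 0`: the colon ideal `(I_Z : f)`. -/
def resIdeal (I : Ideal (PR K m)) (f : PR K m) : Ideal (PR K m) :=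
  Submodule.colon I (Ideal.span {f})

/-- Degree of the scheme-theoretic intersection of the subschemes defined by `I` and `J`. -/
def interDeg (I J : Ideal (PR K m)) : ℕ := idealDeg (I ⊔ J)

/-- The degree-`d` Veronese image of a vector `v`: the evaluation-at-`v` functional on
degree-`d` forms. -/
def nu (d : ℕ) (v : Fin (m+1) → K) : Module.Dual K (Hd K m d) :=
  (MvPolynomial.aeval v).toLinearMap ∘ₗ (Hd K m d).subtype

/-- The linear span of the Veronese image `ν_d(S)` of a set `S` of points of `ℙ^m`. -/
def dualSpan (d : ℕ) (S : Set (Pm K m)) : Submodule K (Module.Dual K (Hd K m d)) :=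
  Submodule.span K ((fun a => nu d a.rep) '' S)

/-- The linear span `⟨ν_d(Z)⟩` of the Veronese image of the subscheme with ideal `I`:
the annihilator of the degree-`d` part of `I`. -/
def schemeSpanSub (I : Ideal (PR K m)) (d : ℕ) : Submodule K (Module.Dual K (Hd K m d)) where
  carrier := {φ | ∀ f : Hd K m d, (f : PR K m) ∈ I → φ f = 0}
  add_mem' := by
    intro a b ha hb f hf
    simp [LinearMap.add_apply, ha f hf, hb f hf]
  zero_mem' := by intro f hf; simp
  smul_mem' := by
    intro c a ha f hf
    simp [LinearMap.smul_apply, ha f hf]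

/-- `P ∈ ⟨ν_d(Z)⟩`, for `Z` the subscheme with ideal `I`. -/
def inSpanI (I : Ideal (PR K m)) (d : ℕ) (P : PN K m d) : Prop := P.rep ∈ schemeSpanSub I d

/-- `P ∈ ⟨ν_d(S)⟩` for a set `S` of points of `ℙ^m`. -/
def inSpanSet (d : ℕ) (S : Set (Pm K m)) (P : PN K m d) : Prop := P.rep ∈ dualSpan d S

/-- `L` is a linear subspace of `ℙ^m`. -/
def IsLinearSub (L : Set (Pm K m)) : Prop :=
  ∃ W : Submodule K (Fin (m+1) → K), L = {a | a.submodule ≤ W}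

/-- `L` is a line of `ℙ^m`. -/
def IsLine (L : Set (Pm K m)) : Prop :=
  ∃ W : Submodule K (Fin (m+1) → K), Module.finrank K W = 2 ∧ L = {a | a.submodule ≤ W}

/-- `L` is a plane of `ℙ^m`. -/
def IsPlane (L : Set (Pm K m)) : Prop :=
  ∃ W : Submodule K (Fin (m+1) → K), Module.finrank K W = 3 ∧ L = {a | a.submodule ≤ W}

/-- `J` is the (saturated homogeneous) ideal of a conic of `ℙ^m`: a degree-2 curve contained
in a plane (possibly reducible). -/
def IsConic (J : Ideal (PR K m)) : Prop :=
  ∃ (W : Submodule K (Fin (m+1) → K)) (q : PR K m),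
    Module.finrank K W = 3 ∧ q.IsHomogeneous 2 ∧
    q ∉ idealOfSet {a : Pm K m | a.submodule ≤ W} ∧
    J = satIdeal (idealOfSet {a : Pm K m | a.submodule ≤ W} ⊔ Ideal.span {q})

/-- The algebra of polynomial functions on a `K`-vector space. -/
def polyFunctions (K V : Type) [Field K] [AddCommGroup V] [Module K V] : Subalgebra K (V → K) :=
  Algebra.adjoin K {g : V → K | ∃ φ : V →ₗ[K] K, g = ⇑φ}

/-- Zariski closure of a subset of a projective space. -/
def zClosure {V : Type} [AddCommGroup V] [Module K V] (T : Set (ℙ K V)) : Set (ℙ K V) :=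
  {P | ∀ F ∈ polyFunctions K V, (∀ Q ∈ T, ∀ c : K, F (c • Q.rep) = 0) →
    ∀ c : K, F (c • P.rep) = 0}

/-- The Veronese variety `X_{m,d} = ν_d(ℙ^m)` as a subset of `PN K m d`. -/
def XSet (K : Type) [Field K] (m d : ℕ) : Set (PN K m d) :=
  {Q | ∃ a : Pm K m, Q.submodule = Submodule.span K {nu d a.rep}}

/-- The image `ν_d(S)` of a set of points of `ℙ^m`, as a subset of `PN K m d`. -/
def nuSet (d : ℕ) (S : Set (Pm K m)) : Set (PN K m d) :=
  {Q | ∃ a ∈ S, Q.submodule = Submodule.span K {nu d a.rep}}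

/-- The rank of a point `P` of `PN` with respect to a subset `Y ⊆ PN`. -/
def rankWrt {m d : ℕ} (Y : Set (PN K m d)) (P : PN K m d) : ℕ :=
  sInf {r | ∃ S : Finset (PN K m d), ↑S ⊆ Y ∧ S.card = r ∧
    P.rep ∈ Submodule.span K (Projectivization.rep '' (S : Set (PN K m d)))}

/-- The `s`-th secant variety of `Y ⊆ PN`: the Zariski closure of the union of the spans
of `s` points of `Y`. -/
def secantWrt {m d : ℕ} (Y : Set (PN K m d)) (s : ℕ) : Set (PN K m d) :=
  zClosure {Q | ∃ S : Finset (PN K m d), ↑S ⊆ Y ∧ S.card ≤ s ∧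
    Q.rep ∈ Submodule.span K (Projectivization.rep '' (S : Set (PN K m d)))}

/-- The border rank of `P` with respect to `Y ⊆ PN`. -/
def brankWrt {m d : ℕ} (Y : Set (PN K m d)) (P : PN K m d) : ℕ :=
  sInf {s | 0 < s ∧ P ∈ secantWrt Y s}

/-- Symmetric rank. -/
def srank {m : ℕ} (d : ℕ) (P : PN K m d) : ℕ := rankWrt (XSet K m d) P

/-- Border rank. -/
def brank {m : ℕ} (d : ℕ) (P : PN K m d) : ℕ := brankWrt (XSet K m d) P

/-- Cactus rank: minimal degree of a zero-dimensional closed subscheme `E ⊂ ℙ^m` with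
`P ∈ ⟨ν_d(E)⟩`. -/
def crank {m : ℕ} (d : ℕ) (P : PN K m d) : ℕ :=
  sInf {c | ∃ Z : PSub K m, IsZeroDimI Z.I ∧ idealDeg Z.I = c ∧ inSpanI Z.I d P}

/-- `σ_{s,r}(X_{m,d})`. -/
def sigmaSet (K : Type) [Field K] (m d s r : ℕ) : Set (PN K m d) :=
  {P | brank d P = s ∧ srank d P = r}

/-- A property `Φ` holds for a general `k`-tuple of points of the linear subspace of `ℙ^m`
determined by `W`. -/
def GenerallyOn (W : Submodule K (Fin (m+1) → K)) (k : ℕ)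
    (Φ : (Fin k → Pm K m) → Prop) : Prop :=
  ∃ w : Fin 3 → W, Submodule.span K (Set.range fun j => (w j : Fin (m+1) → K)) = W ∧
    ∃ F : MvPolynomial (Fin k × Fin 3) K, F ≠ 0 ∧
      ∀ c : Fin k → Fin 3 → K,
        MvPolynomial.eval (fun p => c p.1 p.2) F ≠ 0 →
        ∀ e : Fin k → Pm K m,
          (∀ i, (e i).submodule = Submodule.span K {∑ j, c i j • (w j : Fin (m+1) → K)}) → Φ e

end

/-!
A point of `ℙ^n` is the class of a functional `φ` on forms of degree `d`. With `D = ⟨o, y⟩` and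
`R = ⟨o, o'⟩`, the point `P` is the class of the sum of the `w`-th Taylor coefficient at `o` along
`D`, the `(w - 1)`-st Taylor coefficient at `o'` along `R`, and the values at `o` and at the points
of `E`.

A decomposition of `φ` gives a linear relation in degree `d` on a curvilinear scheme `Z` in the
plane: a sum of residues, with weights that are units at every point of `Z`, which kills all forms
of degree `d`. The key fact is that such a `Z` lies on a conic if `deg Z < 3 d`. Indeed, the
restrictions to `Z` of forms of degrees `i` and `d - i` are orthogonal for the nondegenerate residue
pairing, so their dimensions add up to at most `deg Z`, while without a conic through `Z` the
restrictions of degree `n ≤ d / 2 + 1` have dimension at least `3 n`. Here the two jets force the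
conic to be `D ∪ R`. Hence the points of `E`, being off `D ∪ R`, must occur in the decomposition,
and its other points lie on `D ∪ R`; cancelling the jet along one of the lines by the equation of
that line shows that the jet along the other needs at least `d + 1 - w` points different from `o`.

Conversely, let `n = d + 1 - w`. Averaging `ν_d(p + ζ q)` over the `n`-th roots of unity `ζ`
decomposes the jet along `D` into `n` points, and does so for the jet along `R` up to the stray term
`ν_d(o)`, which is why the value at `o` is part of `φ`.

The border rank is at most `s` since averages of `ν_d(p + ζ t q)` over the `(w + 1)`-st and `w`-th
roots of unity `ζ`, rescaled, degenerate to the two jets as `t` tends to `0`, and at least `s` since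
nondegeneracy of the residue pairing gives a nonvanishing catalecticant minor of `φ` of size `s`.
-/

noncomputable section

open scoped Polynomial
open Module (finrank Dual)

section Forms

open MvPolynomial

variable {K σ : Type*} [Field K]

theorem order_le_totalDegree {f : MvPolynomial σ K} (hf : f ≠ 0) :
    (f : MvPowerSeries σ K).order ≤ f.totalDegree := by
  obtain ⟨e, he⟩ := support_nonempty.mpr hf
  have hcoeff : MvPowerSeries.coeff e (f : MvPowerSeries σ K) ≠ 0 := by
    rwa [coeff_coe, ← mem_support_iff]
  exact (MvPowerSeries.order_le hcoeff).trans (by exact_mod_cast le_totalDegree he)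

theorem isHomogeneous_iff_totalDegree_le_order {f : MvPolynomial σ K} :
    f.IsHomogeneous f.totalDegree ↔ (f.totalDegree : ℕ∞) ≤ (f : MvPowerSeries σ K).order := by
  constructor
  · refine fun hf ↦ MvPowerSeries.le_order fun e he ↦ ?_
    rw [coeff_coe]
    exact hf.coeff_eq_zero (by exact_mod_cast he.ne)
  · intro hf e he
    have hcoeff : MvPowerSeries.coeff e (f : MvPowerSeries σ K) ≠ 0 := by rwa [coeff_coe]
    have hle : f.totalDegree ≤ e.degree := by
      exact_mod_cast hf.trans (MvPowerSeries.order_le hcoeff)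
    rw [show Finsupp.weight 1 e = e.degree by rw [Finsupp.degree_eq_weight_one]; rfl]
    exact le_antisymm (le_totalDegree (mem_support_iff.mpr he)) hle

theorem exists_isHomogeneous_of_mul {f g : MvPolynomial σ K} {n : ℕ}
    (h : (f * g).IsHomogeneous n) (h0 : f * g ≠ 0) :
    ∃ a b, a + b = n ∧ f.IsHomogeneous a ∧ g.IsHomogeneous b := by
  have hf := left_ne_zero_of_mul h0
  have hg := right_ne_zero_of_mul h0
  have hdeg : f.totalDegree + g.totalDegree = n := by
    rw [← totalDegree_mul_of_isDomain hf hg, h.totalDegree h0]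
  have horder : (f.totalDegree : ℕ∞) + g.totalDegree ≤
      (f : MvPowerSeries σ K).order + (g : MvPowerSeries σ K).order := by
    rw [← MvPowerSeries.order_mul, ← coe_mul, ← Nat.cast_add, hdeg, ← h.totalDegree h0]
    exact isHomogeneous_iff_totalDegree_le_order.mp (h.totalDegree h0 ▸ h)
  have hf' := order_le_totalDegree hf
  have hg' := order_le_totalDegree hg
  lift (f : MvPowerSeries σ K).order to ℕ using ne_top_of_le_ne_top (by simp) hf' with a ha
  lift (g : MvPowerSeries σ K).order to ℕ using ne_top_of_le_ne_top (by simp) hg' with b hb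
  norm_cast at horder hf' hg'
  refine ⟨_, _, hdeg, isHomogeneous_iff_totalDegree_le_order.mpr ?_,
    isHomogeneous_iff_totalDegree_le_order.mpr ?_⟩
  · rw [← ha]; norm_cast; lia
  · rw [← hb]; norm_cast; lia

theorem isHomogeneous_of_mul_left {f g : MvPolynomial σ K} {a n : ℕ}
    (h : (f * g).IsHomogeneous n) (hf : f.IsHomogeneous a) (hf0 : f ≠ 0) :
    g.IsHomogeneous (n - a) := by
  rcases eq_or_ne g 0 with rfl | hg
  · exact isHomogeneous_zero _ _ _
  obtain ⟨a', b, rfl, ha', hb⟩ := exists_isHomogeneous_of_mul h (mul_ne_zero hf0 hg)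
  rwa [ha'.inj_right hf hf0, Nat.add_sub_cancel_left]

theorem setOf_degree_eq [Fintype σ] [DecidableEq σ] (n : ℕ) :
    {e : σ →₀ ℕ | e.degree = n} = ↑(Finset.univ.finsuppAntidiag n : Finset (σ →₀ ℕ)) := by
  ext e
  simp [Finsupp.degree_eq_sum]

theorem finrank_homogeneousSubmodule [Fintype σ] (n : ℕ) :
    finrank K (homogeneousSubmodule σ K n) = (Fintype.card σ + n - 1).choose n := by
  classical
  rw [homogeneousSubmodule_eq_finsupp_supported,
    (AddMonoidAlgebra.supportedEquivFinsupp (S := K) (R := K) _).finrank_eq, setOf_degree_eq,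
    Module.finrank_finsupp_self]
  simp [Finset.card_finsuppAntidiag_nat_eq_choose]

instance finite_homogeneousSubmodule [Finite σ] (n : ℕ) :
    Module.Finite K (homogeneousSubmodule σ K n) := by
  classical
  have := Fintype.ofFinite σ
  rw [homogeneousSubmodule_eq_finsupp_supported, setOf_degree_eq]
  exact Module.Finite.equiv (AddMonoidAlgebra.supportedEquivFinsupp (S := K) (R := K) _).symm

theorem eval_smul_of_isHomogeneous {f : MvPolynomial σ K} {n : ℕ} (hf : f.IsHomogeneous n) (c : K)
    (v : σ → K) : eval (c • v) f = c ^ n * eval v f := by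
  simp only [eval_eq, Pi.smul_apply, smul_eq_mul, mul_pow, Finset.prod_mul_distrib,
    Finset.prod_pow_eq_pow_sum, Finset.mul_sum]
  refine Finset.sum_congr rfl fun e he ↦ ?_
  rw [← hf.degree_eq_sum_deg_support he, mul_left_comm]

end Forms

section LinearMaps

variable {K V W ι : Type*} [Field K] [AddCommGroup V] [Module K V] [AddCommGroup W] [Module K W]

theorem exists_linearMap_apply_eq {x : ι → V} (hx : LinearIndependent K x) (y : ι → W) :
    ∃ φ : V →ₗ[K] W, ∀ i, φ (x i) = y i := by
  obtain ⟨φ, hφ⟩ := (Finsupp.linearCombination K y ∘ₗ hx.repr).exists_extend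
  refine ⟨φ, fun i ↦ ?_⟩
  have hi : x i ∈ Submodule.span K (Set.range x) := Submodule.subset_span ⟨i, rfl⟩
  simpa [hx.repr_eq_single i ⟨x i, hi⟩ rfl] using LinearMap.congr_fun hφ ⟨x i, hi⟩

theorem exists_mem_linearIndependent_pair {U : Submodule K V} (hU : 1 < finrank K U) {x : V}
    (hx : x ∈ U) (hx0 : x ≠ 0) : ∃ y ∈ U, LinearIndependent K ![x, y] := by
  obtain ⟨y, hy⟩ := exists_linearIndependent_pair_of_one_lt_finrank hU
    (x := (⟨x, hx⟩ : U)) (Subtype.coe_ne_coe.mp hx0)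
  refine ⟨y, y.2, LinearIndependent.pair_iff.mpr ?_⟩
  simpa [LinearIndependent.pair_iff, Subtype.ext_iff] using hy

end LinearMaps

section LineRestrict

variable {K σ : Type*} [Field K]

/-- The restriction `f(p + X q)` of a polynomial to the line through `p` and `q`, in the affine
coordinate in which `p` is the origin and `q` is the point at infinity. -/
def lineRestrict (p q : σ → K) : MvPolynomial σ K →ₐ[K] K[X] :=
  MvPolynomial.aeval fun i ↦ Polynomial.C (p i) + Polynomial.C (q i) * Polynomial.X

theorem eval_lineRestrict (p q : σ → K) (f : MvPolynomial σ K) (t : K) :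
    (lineRestrict p q f).eval t = MvPolynomial.eval (p + t • q) f := by
  have h : (Polynomial.aeval t).comp (lineRestrict p q) = MvPolynomial.aeval (p + t • q) := by
    ext i
    simp [lineRestrict, mul_comm t]
  simpa using DFunLike.congr_fun h f

theorem coeff_zero_lineRestrict (p q : σ → K) (f : MvPolynomial σ K) :
    (lineRestrict p q f).coeff 0 = MvPolynomial.eval p f := by
  rw [Polynomial.coeff_zero_eq_eval_zero, eval_lineRestrict, zero_smul, add_zero]

theorem homogenize_lineRestrict (p q : σ → K) {f : MvPolynomial σ K} {n : ℕ}
    (hf : f.IsHomogeneous n) :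
    (lineRestrict p q f).homogenize n = MvPolynomial.aeval (fun i ↦
      MvPolynomial.C (p i) * MvPolynomial.X 1 + MvPolynomial.C (q i) * MvPolynomial.X 0) f := by
  refine Polynomial.homogenize_eq_of_isHomogeneous ?_ ?_
  · rw [← one_mul n]
    exact hf.aeval _ fun i ↦ ((MvPolynomial.isHomogeneous_X K 1).C_mul (p i)).add
      ((MvPolynomial.isHomogeneous_X K 0).C_mul (q i))
  · rw [← AlgHom.comp_apply, lineRestrict]
    congr 1
    ext i
    simp [Polynomial.algebraMap_eq]

theorem natDegree_lineRestrict_le (p q : σ → K) {f : MvPolynomial σ K} {n : ℕ}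
    (hf : f.IsHomogeneous n) : (lineRestrict p q f).natDegree ≤ n := by
  refine (MvPolynomial.aeval_natDegree_le f hf.totalDegree_le _ (n := 1) fun i ↦ ?_).trans
    (mul_one n).le
  compute_degree

theorem coeff_lineRestrict_swap (p q : σ → K) {f : MvPolynomial σ K} {n i : ℕ}
    (hf : f.IsHomogeneous n) (hi : i ≤ n) :
    (lineRestrict q p f).coeff i = (lineRestrict p q f).coeff (n - i) := by
  have hswap : (lineRestrict q p f).homogenize n =
      MvPolynomial.rename (Equiv.swap 0 1) ((lineRestrict p q f).homogenize n) := by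
    rw [homogenize_lineRestrict _ _ hf, homogenize_lineRestrict _ _ hf, ← AlgHom.comp_apply]
    congr 1
    ext1 j
    simp [add_comm]
  have h := congr_arg (MvPolynomial.coeff
    (Finsupp.mapDomain (Equiv.swap (0 : Fin 2) 1) (.single 0 (n - i) + .single 1 i))) hswap
  rw [MvPolynomial.coeff_rename_mapDomain _ (Equiv.injective _), Finsupp.mapDomain_add,
    Finsupp.mapDomain_single, Finsupp.mapDomain_single, Equiv.swap_apply_left,
    Equiv.swap_apply_right, Polynomial.coeff_homogenize, Polynomial.coeff_homogenize] at h
  simpa [Nat.add_sub_cancel' hi, Nat.sub_add_cancel hi] using h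

theorem coeff_lineRestrict_top (p q : σ → K) {f : MvPolynomial σ K} {n : ℕ}
    (hf : f.IsHomogeneous n) : (lineRestrict p q f).coeff n = MvPolynomial.eval q f := by
  rw [coeff_lineRestrict_swap q p hf le_rfl, Nat.sub_self, coeff_zero_lineRestrict]

theorem eval_smul_add_smul (p q : σ → K) {f : MvPolynomial σ K} {n : ℕ} (hf : f.IsHomogeneous n)
    (a b : K) : MvPolynomial.eval (a • p + b • q) f =
      MvPolynomial.eval ![b, a] ((lineRestrict p q f).homogenize n) := by
  have h : (MvPolynomial.aeval ![b, a]).comp (MvPolynomial.aeval fun i ↦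
      MvPolynomial.C (p i) * MvPolynomial.X 1 + MvPolynomial.C (q i) * MvPolynomial.X 0) =
      (MvPolynomial.aeval (a • p + b • q) : MvPolynomial σ K →ₐ[K] K) := by
    ext i
    simp [mul_comm]
  simpa [homogenize_lineRestrict p q hf] using (DFunLike.congr_fun h f).symm

theorem eval_eq_zero_of_lineRestrict_eq_zero {p q v : σ → K} {f : MvPolynomial σ K} {n : ℕ}
    (hf : f.IsHomogeneous n) (h : lineRestrict p q f = 0) (hv : v ∈ Submodule.span K {p, q}) :
    MvPolynomial.eval v f = 0 := by
  obtain ⟨a, b, rfl⟩ := Submodule.mem_span_pair.mp hv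
  rw [eval_smul_add_smul p q hf, h, Polynomial.homogenize_zero, map_zero]

end LineRestrict

section LinearForm

variable {K σ : Type*} [Field K] [Fintype σ] [DecidableEq σ]

/-- The linear form `∑ φ(e_i) X_i` whose value at `v` is `φ v`. -/
def linearForm (φ : Dual K (σ → K)) : MvPolynomial σ K :=
  ∑ i, MvPolynomial.C (φ (Pi.single i 1)) * MvPolynomial.X i

theorem isHomogeneous_linearForm (φ : Dual K (σ → K)) : (linearForm φ).IsHomogeneous 1 :=
  .sum _ _ _ fun i _ ↦ (MvPolynomial.isHomogeneous_X K i).C_mul _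

@[simp]
theorem eval_linearForm (φ : Dual K (σ → K)) (v : σ → K) :
    MvPolynomial.eval v (linearForm φ) = φ v := by
  conv_rhs => rw [pi_eq_sum_univ' v, map_sum]
  simp [linearForm, mul_comm]

@[simp]
theorem lineRestrict_linearForm (φ : Dual K (σ → K)) (p q : σ → K) :
    lineRestrict p q (linearForm φ) =
      Polynomial.C (φ p) + Polynomial.C (φ q) * Polynomial.X := by
  rw [← eval_linearForm φ p, ← eval_linearForm φ q]
  simp only [lineRestrict, linearForm, map_sum, map_mul, MvPolynomial.aeval_C,
    MvPolynomial.aeval_X, MvPolynomial.eval_C, MvPolynomial.eval_X, Polynomial.algebraMap_eq,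
    mul_add, Finset.sum_add_distrib, Finset.sum_mul, mul_assoc]

theorem linearForm_ne_zero {φ : Dual K (σ → K)} (hφ : φ ≠ 0) : linearForm φ ≠ 0 := by
  obtain ⟨v, hv⟩ := DFunLike.ne_iff.mp hφ
  intro h
  exact hv (by simpa [h] using (eval_linearForm φ v).symm)

theorem linearForm_dvd [Infinite K] {φ : Dual K (σ → K)} (hφ : φ ≠ 0) {f : MvPolynomial σ K}
    (hf : ∀ v, φ v = 0 → MvPolynomial.eval v f = 0) : linearForm φ ∣ f := by
  obtain ⟨u, hu⟩ : ∃ u, φ u = 1 := by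
    obtain ⟨u, hu⟩ := DFunLike.ne_iff.mp hφ
    exact ⟨(φ u)⁻¹ • u, by simpa using inv_mul_cancel₀ hu⟩
  -- Projecting along `u` onto `ker φ` does not change a polynomial modulo `linearForm φ`.
  let proj : MvPolynomial σ K →ₐ[K] MvPolynomial σ K :=
    MvPolynomial.aeval fun i ↦ MvPolynomial.X i - MvPolynomial.C (u i) * linearForm φ
  have hproj : proj f = 0 := by
    refine MvPolynomial.funext fun v ↦ ?_
    have hcomp : (MvPolynomial.aeval v).comp proj = MvPolynomial.aeval (v - φ v • u) := by
      ext i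
      simp [proj, MvPolynomial.aeval_eq_eval, mul_comm]
    simpa [hf (v - φ v • u) (by simp [hu])] using DFunLike.congr_fun hcomp f
  have hmod : (Ideal.Quotient.mkₐ K (Ideal.span {linearForm φ})).comp proj =
      Ideal.Quotient.mkₐ K (Ideal.span {linearForm φ}) := by
    ext i
    simp [proj]
  have h := DFunLike.congr_fun hmod f
  rw [AlgHom.comp_apply, hproj, map_zero] at h
  exact (Ideal.Quotient.eq_zero_iff_dvd _ _).mp h.symm

end LinearForm

theorem exists_form_lineRestrict_eq {K σ : Type*} [Field K] [Finite σ] {p q : σ → K}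
    (hpq : LinearIndependent K ![p, q]) {u : K[X]} {n : ℕ} (hu : u.natDegree ≤ n) :
    ∃ F : MvPolynomial σ K, F.IsHomogeneous n ∧ lineRestrict p q F = u := by
  classical
  have := Fintype.ofFinite σ
  obtain ⟨x, hx⟩ := exists_linearMap_apply_eq hpq (![0, 1] : Fin 2 → K)
  obtain ⟨z, hz⟩ := exists_linearMap_apply_eq hpq (![1, 0] : Fin 2 → K)
  simp only [Fin.forall_fin_two, Matrix.cons_val_zero, Matrix.cons_val_one] at hx hz
  refine ⟨MvPolynomial.aeval ![linearForm x, linearForm z] (u.homogenize n), ?_, ?_⟩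
  · have hhom := (Polynomial.isHomogeneous_homogenize (n := n) u).aeval
      ![linearForm x, linearForm z] (n := 1) <| by
        simp [Fin.forall_fin_two, isHomogeneous_linearForm]
    rwa [one_mul] at hhom
  · rw [← AlgHom.comp_apply, MvPolynomial.comp_aeval,
      Polynomial.aeval_homogenize_of_eq_one hu _ (by simp [hz])]
    simp [hx]

section PlaneLine

variable {K : Type*} [Field K]

theorem mem_span_pair_of_apply_eq_zero {φ : Dual K (Fin 3 → K)} (hφ : φ ≠ 0) {p q v : Fin 3 → K}
    (hpq : LinearIndependent K ![p, q]) (hp : φ p = 0) (hq : φ q = 0) (hv : φ v = 0) :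
    v ∈ Submodule.span K {p, q} := by
  have hle : Submodule.span K {p, q} ≤ LinearMap.ker φ := by
    simp [Submodule.span_le, Set.insert_subset_iff, hp, hq]
  have hspan : finrank K (Submodule.span K {p, q}) = 2 := by
    rw [← Matrix.range_cons_cons_empty p q ![], finrank_span_eq_card hpq, Fintype.card_fin]
  have hker : finrank K (LinearMap.ker φ) = 2 := by
    simpa using Module.Dual.finrank_ker_add_one_of_ne_zero hφ
  rw [Submodule.eq_of_le_of_finrank_eq hle (hspan.trans hker.symm)]
  exact hv

theorem linearForm_dvd_of_lineRestrict_eq_zero [Infinite K] {φ : Dual K (Fin 3 → K)} (hφ : φ ≠ 0)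
    {p q : Fin 3 → K} (hpq : LinearIndependent K ![p, q]) (hp : φ p = 0) (hq : φ q = 0)
    {f : MvPolynomial (Fin 3) K} {n : ℕ} (hf : f.IsHomogeneous n)
    (h : lineRestrict p q f = 0) : linearForm φ ∣ f :=
  linearForm_dvd hφ fun _ hv ↦ eval_eq_zero_of_lineRestrict_eq_zero hf h
    (mem_span_pair_of_apply_eq_zero hφ hpq hp hq hv)

end PlaneLine

/-- A finite curvilinear scheme in a projective space: at the point `[point c]` it is the divisor
of degree `order c + 1` of the line joining `point c` and `dir c`. -/
structure JetScheme (K σ ι : Type*) [Field K] where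
  point : ι → σ → K
  dir : ι → σ → K
  order : ι → ℕ
  linearIndependent_point_dir : ∀ c, LinearIndependent K ![point c, dir c]
  linearIndependent_point : Pairwise fun c c' ↦ LinearIndependent K ![point c, point c']

namespace JetScheme

open Polynomial (X)

variable {K σ ι : Type*} [Field K] (Z : JetScheme K σ ι)

/-- The restriction of a form to the line carrying the component of `Z` at `[point c]`. -/
def restrict (c : ι) : MvPolynomial σ K →ₐ[K] K[X] := lineRestrict (Z.point c) (Z.dir c)

/-- The ring of functions on `Z`. -/
abbrev CoordRing : Type _ := (c : ι) → AdjoinRoot (X ^ (Z.order c + 1) : K[X])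

/-- The restriction of a form to `Z`, trivialized by the choice of the vectors `point c`. -/
def toCoordRing : MvPolynomial σ K →ₐ[K] Z.CoordRing :=
  AlgHom.pi fun c ↦ (AdjoinRoot.mkₐ _).comp (Z.restrict c)

theorem toCoordRing_apply (f : MvPolynomial σ K) (c : ι) :
    Z.toCoordRing f c = AdjoinRoot.mk _ (Z.restrict c f) := rfl

theorem toCoordRing_eq_zero_iff {f : MvPolynomial σ K} :
    Z.toCoordRing f = 0 ↔ ∀ c, X ^ (Z.order c + 1) ∣ Z.restrict c f := by
  simp [funext_iff, toCoordRing_apply, AdjoinRoot.mk_eq_zero]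

theorem isUnit_toCoordRing_apply {f : MvPolynomial σ K} {c : ι}
    (hf : MvPolynomial.eval (Z.point c) f ≠ 0) : IsUnit (Z.toCoordRing f c) := by
  have hdvd : ¬ X ∣ Z.restrict c f := by
    rwa [Polynomial.X_dvd_iff, restrict, coeff_zero_lineRestrict]
  obtain ⟨a, b, h⟩ := (Polynomial.irreducible_X.coprime_iff_not_dvd.mpr hdvd).pow_left
    (m := Z.order c + 1)
  have := congr_arg (AdjoinRoot.mk (X ^ (Z.order c + 1))) h
  rw [map_add, map_mul, AdjoinRoot.mk_self, mul_zero, zero_add, map_mul, map_one] at this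
  exact .of_mul_eq_one_right _ this

theorem isUnit_toCoordRing {f : MvPolynomial σ K}
    (hf : ∀ c, MvPolynomial.eval (Z.point c) f ≠ 0) : IsUnit (Z.toCoordRing f) :=
  Pi.isUnit_iff.mpr fun c ↦ Z.isUnit_toCoordRing_apply (hf c)

instance (c : ι) : Module.Finite K (AdjoinRoot (X ^ (Z.order c + 1) : K[X])) :=
  (Polynomial.monic_X_pow _).finite_adjoinRoot

/-- The degree of `Z`. -/
def length [Fintype ι] : ℕ := ∑ c, (Z.order c + 1)

theorem finrank_coordRing [Fintype ι] : finrank K Z.CoordRing = Z.length := by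
  rw [Module.finrank_pi_fintype, length]
  refine Finset.sum_congr rfl fun c _ ↦ ?_
  rw [(AdjoinRoot.powerBasis' (Polynomial.monic_X_pow _)).finrank, AdjoinRoot.powerBasis'_dim,
    Polynomial.natDegree_X_pow]

theorem exists_form_separating [Fintype ι] [Finite σ] (c : ι) :
    ∃ G : MvPolynomial σ K, G.IsHomogeneous (Z.length - (Z.order c + 1)) ∧
      MvPolynomial.eval (Z.point c) G = 1 ∧ ∀ c' ≠ c, Z.toCoordRing G c' = 0 := by
  classical
  have := Fintype.ofFinite σ
  have hex (c' : ι) : ∃ ℓ : Dual K (σ → K), c' ≠ c → ℓ (Z.point c') = 0 ∧ ℓ (Z.point c) = 1 := by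
    by_cases h : c' = c
    · exact ⟨0, fun h' ↦ absurd h h'⟩
    obtain ⟨ℓ, hℓ⟩ := exists_linearMap_apply_eq (Z.linearIndependent_point h) (![0, 1] : Fin 2 → K)
    exact ⟨ℓ, fun _ ↦ ⟨hℓ 0, hℓ 1⟩⟩
  choose ℓ hℓ using hex
  refine ⟨∏ c' ∈ Finset.univ.erase c, linearForm (ℓ c') ^ (Z.order c' + 1), ?_, ?_, ?_⟩
  · rw [length, ← Finset.add_sum_erase _ _ (Finset.mem_univ c), Nat.add_sub_cancel_left]
    refine .prod _ _ _ fun c' _ ↦ ?_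
    simpa using (isHomogeneous_linearForm (ℓ c')).pow (Z.order c' + 1)
  · rw [map_prod]
    refine Finset.prod_eq_one fun c' hc' ↦ ?_
    simp [hℓ c' (Finset.ne_of_mem_erase hc')]
  · intro c' hc'
    rw [toCoordRing_apply, AdjoinRoot.mk_eq_zero, map_prod]
    refine .trans ?_ (Finset.dvd_prod_of_mem _ (Finset.mem_erase.mpr ⟨hc', Finset.mem_univ c'⟩))
    rw [map_pow, restrict, lineRestrict_linearForm, (hℓ c' hc').1, map_zero, zero_add]
    exact pow_dvd_pow_of_dvd (Dvd.intro_left _ rfl) _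

theorem exists_form_toCoordRing_apply_eq [Finite σ] {c : ι} {n : ℕ} (hn : Z.order c ≤ n)
    (b : AdjoinRoot (X ^ (Z.order c + 1) : K[X])) :
    ∃ F : MvPolynomial σ K, F.IsHomogeneous n ∧ Z.toCoordRing F c = b := by
  have hX := Polynomial.monic_X_pow (R := K) (Z.order c + 1)
  obtain ⟨u, rfl⟩ := AdjoinRoot.mk_surjective b
  have hu : (u %ₘ X ^ (Z.order c + 1)).natDegree ≤ n := by
    have := Polynomial.natDegree_modByMonic_lt u hX fun h ↦ by simpa using congr_arg (·.natDegree) h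
    rw [Polynomial.natDegree_X_pow] at this
    lia
  obtain ⟨F, hF, hFu⟩ := exists_form_lineRestrict_eq (Z.linearIndependent_point_dir c) hu
  refine ⟨F, hF, ?_⟩
  rw [toCoordRing_apply, restrict, hFu, AdjoinRoot.mk_eq_mk]
  exact Polynomial.dvd_modByMonic_sub u _

/-- The space of restrictions to `Z` of forms of degree `n`. -/
def formImage (n : ℕ) : Submodule K Z.CoordRing :=
  (MvPolynomial.homogeneousSubmodule σ K n).map Z.toCoordRing.toLinearMap

theorem formImage_eq_top [Fintype ι] [Finite σ] {n : ℕ} (hn : Z.length ≤ n + 1) :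
    Z.formImage n = ⊤ := by
  classical
  refine eq_top_iff.mpr fun b _ ↦ ?_
  rw [← Finset.univ_sum_single b]
  refine Submodule.sum_mem _ fun c _ ↦ ?_
  have hc : Z.order c + 1 ≤ Z.length :=
    Finset.single_le_sum (f := fun c ↦ Z.order c + 1) (fun _ _ ↦ Nat.zero_le _) (Finset.mem_univ c)
  obtain ⟨G, hG, hGc, hG0⟩ := Z.exists_form_separating c
  obtain ⟨v, hv⟩ := (Z.isUnit_toCoordRing_apply (hGc ▸ one_ne_zero)).exists_right_inv
  obtain ⟨F, hF, hFc⟩ := Z.exists_form_toCoordRing_apply_eq (n := n - (Z.length - (Z.order c + 1)))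
    (by lia) (v * b c)
  refine ⟨G * F, ?_, ?_⟩
  · have := hG.mul hF
    rwa [Nat.add_sub_cancel' (by lia)] at this
  · ext c'
    rcases eq_or_ne c' c with rfl | hc'
    · simp [hFc, ← mul_assoc, hv]
    · simp [hG0 c' hc', Pi.single_eq_of_ne hc']

section Residue

variable [Fintype ι]

/-- The functional on the functions on `Z` which at the point `c` multiplies by `A c` and takes
the coefficient of the socle element `X ^ order c`. -/
def residue (A : ι → K[X]) : Dual K Z.CoordRing :=
  ∑ c, Polynomial.lcoeff K (Z.order c) ∘ₗ
    AdjoinRoot.modByMonicHom (Polynomial.monic_X_pow (Z.order c + 1)) ∘ₗ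
    LinearMap.mulLeft K (AdjoinRoot.mk _ (A c)) ∘ₗ LinearMap.proj c

theorem residue_mk (A u : ι → K[X]) :
    Z.residue A (fun c ↦ AdjoinRoot.mk _ (u c)) = ∑ c, (A c * u c).coeff (Z.order c) := by
  have hcoeff (v : K[X]) (k : ℕ) : (v %ₘ X ^ (k + 1)).coeff k = v.coeff k := by
    rw [← sub_eq_zero, ← Polynomial.coeff_sub]
    exact Polynomial.X_pow_dvd_iff.mp (Polynomial.dvd_modByMonic_sub v _) k k.lt_succ_self
  simp [residue, ← map_mul, AdjoinRoot.modByMonicHom_mk, hcoeff]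

theorem residue_toCoordRing (A : ι → K[X]) (f : MvPolynomial σ K) :
    Z.residue A (Z.toCoordRing f) = ∑ c, (A c * Z.restrict c f).coeff (Z.order c) :=
  Z.residue_mk A _

theorem eq_zero_of_forall_residue_mul_eq_zero {A : ι → K[X]} (hA : ∀ c, (A c).coeff 0 ≠ 0)
    {b : Z.CoordRing} (hb : ∀ b', Z.residue A (b * b') = 0) : b = 0 := by
  classical
  choose u hu using fun c ↦ AdjoinRoot.mk_surjective (b c)
  ext c
  have hcop : IsCoprime (X ^ (Z.order c + 1)) (A c) := by
    refine (Polynomial.irreducible_X.coprime_iff_not_dvd.mpr ?_).pow_left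
    rw [Polynomial.X_dvd_iff]
    exact hA c
  rw [← hu, Pi.zero_apply, AdjoinRoot.mk_eq_zero]
  refine hcop.dvd_of_dvd_mul_left (Polynomial.X_pow_dvd_iff.mpr fun j hj ↦ ?_)
  let v : ι → K[X] := Pi.single c (X ^ (Z.order c - j))
  have h := hb fun c' ↦ AdjoinRoot.mk _ (v c')
  have hmul : (b * fun c' ↦ AdjoinRoot.mk _ (v c')) = fun c' ↦ AdjoinRoot.mk _ (u c' * v c') := by
    ext c'
    simp [hu]
  have hvc : v c = X ^ (Z.order c - j) := Pi.single_eq_same _ _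
  rw [hmul, residue_mk, Finset.sum_eq_single c (fun c' _ hc' ↦ by simp [v, hc']) (by simp),
    ← mul_assoc, hvc, Polynomial.coeff_mul_X_pow',
    if_pos (Nat.sub_le _ _), Nat.sub_sub_self (by lia)] at h
  exact h

/-- The symmetric bilinear form `(b, b') ↦ residue (b b')`. -/
def residueForm (A : ι → K[X]) : LinearMap.BilinForm K Z.CoordRing :=
  (LinearMap.mul K _).compr₂ (Z.residue A)

theorem residueForm_apply (A : ι → K[X]) (b b' : Z.CoordRing) :
    Z.residueForm A b b' = Z.residue A (b * b') := rfl

theorem nondegenerate_residueForm {A : ι → K[X]} (hA : ∀ c, (A c).coeff 0 ≠ 0) :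
    (Z.residueForm A).Nondegenerate := by
  refine ⟨fun b hb ↦ Z.eq_zero_of_forall_residue_mul_eq_zero hA hb, fun b hb ↦
    Z.eq_zero_of_forall_residue_mul_eq_zero hA fun b' ↦ ?_⟩
  rw [mul_comm]
  exact hb b'

theorem exists_forms_gram_eq_one [Finite σ] {A : ι → K[X]} (hA : ∀ c, (A c).coeff 0 ≠ 0) {n n' : ℕ}
    (hn : Z.length ≤ n + 1) (hn' : Z.length ≤ n' + 1) :
    ∃ f g : Fin Z.length → MvPolynomial σ K, (∀ i, (f i).IsHomogeneous n) ∧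
      (∀ i, (g i).IsHomogeneous n') ∧
      (Matrix.of fun i j ↦ Z.residue A (Z.toCoordRing (f i * g j))) = 1 := by
  have hB := Z.nondegenerate_residueForm hA
  let b := Module.finBasisOfFinrankEq K Z.CoordRing Z.finrank_coordRing
  have hlift {N : ℕ} (hN : Z.length ≤ N + 1) (x : Z.CoordRing) :
      ∃ f : MvPolynomial σ K, f.IsHomogeneous N ∧ Z.toCoordRing f = x := by
    have hx : x ∈ Z.formImage N := Z.formImage_eq_top hN ▸ Submodule.mem_top
    exact hx
  choose f hf hfb using fun i ↦ hlift hn ((Z.residueForm A).dualBasis hB b i)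
  choose g hg hgb using fun i ↦ hlift hn' (b i)
  refine ⟨f, g, hf, hg, ?_⟩
  ext i j
  rw [Matrix.of_apply, map_mul, hfb, hgb, ← residueForm_apply,
    LinearMap.BilinForm.apply_dualBasis_left, Matrix.one_apply]
  simp [eq_comm]

theorem finrank_formImage_add_le [Finite σ] {A : ι → K[X]} (hA : ∀ c, (A c).coeff 0 ≠ 0) {i j : ℕ}
    (h : ∀ f : MvPolynomial σ K, f.IsHomogeneous (i + j) → Z.residue A (Z.toCoordRing f) = 0) :
    finrank K (Z.formImage i) + finrank K (Z.formImage j) ≤ Z.length := by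
  have hle : Z.formImage j ≤ (Z.residueForm A).orthogonal (Z.formImage i) := by
    rintro _ ⟨g, hg, rfl⟩ _ ⟨f, hf, rfl⟩
    simpa [residueForm_apply, ← map_mul] using h (f * g) (hf.mul hg)
  have hdim := LinearMap.BilinForm.finrank_orthogonal (Z.nondegenerate_residueForm hA)
    (Z.formImage i)
  have := Submodule.finrank_mono hle
  have := (Z.formImage i).finrank_le
  rw [Z.finrank_coordRing] at *
  lia

end Residue

end JetScheme

section PlaneCurves

open MvPolynomial (homogeneousSubmodule)

variable {K : Type*} [Field K]

theorem choose_two_add_choose_two (a b n : ℕ) :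
    (a + b + n).choose 2 + n.choose 2 = (a + n).choose 2 + (b + n).choose 2 + a * b := by
  have h : (((a + b + n).choose 2 + n.choose 2 : ℕ) : ℚ) =
      ((a + n).choose 2 + (b + n).choose 2 + a * b : ℕ) := by
    push_cast [Nat.cast_choose_two]
    ring
  exact_mod_cast h

theorem finrank_homogeneousSubmodule_fin_three (n : ℕ) :
    finrank K (homogeneousSubmodule (Fin 3) K n) = (n + 2).choose 2 := by
  rw [finrank_homogeneousSubmodule, Fintype.card_fin, show 3 + n - 1 = n + 2 by lia,
    Nat.choose_symm_add]

/-- The space of products of the polynomial `f` with forms of degree `n`. -/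
def multiples {σ : Type*} (f : MvPolynomial σ K) (n : ℕ) : Submodule K (MvPolynomial σ K) :=
  (homogeneousSubmodule σ K n).map (LinearMap.mulLeft K f)

instance {σ : Type*} [Finite σ] (f : MvPolynomial σ K) (n : ℕ) :
    Module.Finite K (multiples f n) :=
  inferInstanceAs (Module.Finite K ((homogeneousSubmodule σ K n).map _))

theorem multiples_le {σ : Type*} {f : MvPolynomial σ K} {a n : ℕ} (hf : f.IsHomogeneous a)
    (han : a ≤ n) : multiples f (n - a) ≤ homogeneousSubmodule σ K n := by
  rintro _ ⟨h, hh, rfl⟩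
  have := hf.mul hh
  rwa [Nat.add_sub_cancel' han] at this

theorem finrank_multiples {f : MvPolynomial (Fin 3) K} (hf : f ≠ 0) (n : ℕ) :
    finrank K (multiples f n) = (n + 2).choose 2 := by
  rw [← finrank_homogeneousSubmodule_fin_three (K := K) n]
  exact (Submodule.equivMapOfInjective _ (mul_right_injective₀ hf) _).finrank_eq.symm

theorem multiples_inf_le {σ : Type*} {f g : MvPolynomial σ K} {a b n : ℕ} (hf : f.IsHomogeneous a)
    (hg : g.IsHomogeneous b) (hf0 : f ≠ 0) (hg0 : g ≠ 0) (hfg : IsRelPrime f g) (hn : a + b ≤ n) :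
    multiples f (n - a) ⊓ multiples g (n - b) ≤ multiples (f * g) (n - (a + b)) := by
  rintro _ ⟨⟨u, -, rfl⟩, ⟨v, hv, huv⟩⟩
  obtain ⟨c, rfl⟩ := hfg.dvd_of_dvd_mul_left ⟨u, huv⟩
  have hgc : g * (f * c) = f * g * c := by ring
  refine ⟨c, isHomogeneous_of_mul_left (n := n) ?_ (hf.mul hg) (mul_ne_zero hf0 hg0), ?_⟩
  · rw [← hgc]
    exact multiples_le hg (by lia) ⟨_, hv, rfl⟩
  · rw [LinearMap.mulLeft_apply, ← hgc]
    exact huv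

theorem choose_two_le_finrank_multiples_sup {f g : MvPolynomial (Fin 3) K} {a b n : ℕ}
    (hf : f.IsHomogeneous a) (hg : g.IsHomogeneous b) (hf0 : f ≠ 0) (hg0 : g ≠ 0)
    (hfg : IsRelPrime f g) (hn : a + b ≤ n) :
    (n + 2).choose 2 ≤
      finrank K (multiples f (n - a) ⊔ multiples g (n - b) : Submodule K _) + a * b := by
  have hinf := Submodule.finrank_mono (multiples_inf_le hf hg hf0 hg0 hfg hn)
  have hsup := Submodule.finrank_sup_add_finrank_inf_eq (multiples f (n - a)) (multiples g (n - b))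
  obtain ⟨k, rfl⟩ := Nat.exists_eq_add_of_le hn
  have hchoose := choose_two_add_choose_two a b (k + 2)
  rw [finrank_multiples (mul_ne_zero hf0 hg0)] at hinf
  rw [finrank_multiples hf0, finrank_multiples hg0] at hsup
  rw [show a + b + k - a = b + k by lia, show a + b + k - b = a + k by lia] at *
  rw [show a + b + k - (a + b) = k by lia] at *
  simp only [← add_assoc] at *
  lia

theorem JetScheme.length_le_mul {ι : Type*} [Fintype ι] (Z : JetScheme K (Fin 3) ι)
    {f g : MvPolynomial (Fin 3) K} {a b : ℕ}
    (hf : f.IsHomogeneous a) (hg : g.IsHomogeneous b) (hf0 : f ≠ 0) (hg0 : g ≠ 0)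
    (hfg : IsRelPrime f g) (hfZ : Z.toCoordRing f = 0) (hgZ : Z.toCoordRing g = 0) :
    Z.length ≤ a * b := by
  let n := a + b + Z.length
  let π := Z.toCoordRing.toLinearMap.domRestrict (homogeneousSubmodule (Fin 3) K n)
  have hrange : LinearMap.range π = ⊤ := by
    rw [LinearMap.range_domRestrict]
    exact Z.formImage_eq_top (by lia)
  have hle : multiples f (n - a) ⊔ multiples g (n - b) ≤ (LinearMap.ker π).map
      (homogeneousSubmodule (Fin 3) K n).subtype := by
    refine sup_le ?_ ?_
    · rintro _ ⟨h, hh, rfl⟩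
      exact ⟨⟨_, multiples_le hf (by lia) ⟨h, hh, rfl⟩⟩, by simp [π, hfZ], rfl⟩
    · rintro _ ⟨h, hh, rfl⟩
      exact ⟨⟨_, multiples_le hg (by lia) ⟨h, hh, rfl⟩⟩, by simp [π, hgZ], rfl⟩
  have hker := Submodule.finrank_mono hle
  rw [Submodule.finrank_map_subtype_eq] at hker
  have hrank := π.finrank_range_add_finrank_ker
  rw [hrange, finrank_top, Z.finrank_coordRing, finrank_homogeneousSubmodule_fin_three] at hrank
  have := choose_two_le_finrank_multiples_sup hf hg hf0 hg0 hfg (n := n) (by lia)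
  lia

theorem linearIndependent_pair_iff_mk_ne {V : Type*} [AddCommGroup V] [Module K V] {v w : V}
    (hv : v ≠ 0) (hw : w ≠ 0) : LinearIndependent K ![v, w] ↔
      Projectivization.mk K v hv ≠ Projectivization.mk K w hw := by
  rw [LinearIndependent.pair_iff' hv, ne_comm, Ne, Projectivization.mk_eq_mk_iff', not_exists]

theorem linearIndependent_rep_pair {V : Type*} [AddCommGroup V] [Module K V] {a b : ℙ K V}
    (h : a ≠ b) : LinearIndependent K ![a.rep, b.rep] := by
  rwa [linearIndependent_pair_iff_mk_ne a.rep_nonzero b.rep_nonzero, a.mk_rep, b.mk_rep]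

theorem finite_setOf_common_zero {f g : MvPolynomial (Fin 3) K} {a b : ℕ}
    (hf : f.IsHomogeneous a) (hg : g.IsHomogeneous b) (hf0 : f ≠ 0) (hg0 : g ≠ 0)
    (hfg : IsRelPrime f g) : {x : ℙ K (Fin 3 → K) |
      MvPolynomial.eval x.rep f = 0 ∧ MvPolynomial.eval x.rep g = 0}.Finite := by
  by_contra hinf
  obtain ⟨T, hT, hcard⟩ := Set.Infinite.exists_subset_card_eq hinf (a * b + 1)
  choose u hu using fun x : T ↦ exists_linearIndependent_pair_of_one_lt_finrank
    (R := K) (by simp) (x : ℙ K (Fin 3 → K)).rep_nonzero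
  let Z : JetScheme K (Fin 3) T :=
    ⟨fun x ↦ x.1.rep, u, fun _ ↦ 0, hu, fun x y hxy ↦
      linearIndependent_rep_pair (Subtype.coe_ne_coe.mpr hxy)⟩
  have hZ {h : MvPolynomial (Fin 3) K} (hh : ∀ x ∈ T, MvPolynomial.eval x.rep h = 0) :
      Z.toCoordRing h = 0 := by
    refine Z.toCoordRing_eq_zero_iff.mpr fun x ↦ ?_
    rw [zero_add, pow_one, Polynomial.X_dvd_iff, JetScheme.restrict, coeff_zero_lineRestrict]
    exact hh x x.2
  have hlen := Z.length_le_mul hf hg hf0 hg0 hfg (hZ fun x hx ↦ (hT hx).1) (hZ fun x hx ↦ (hT hx).2)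
  have : Z.length = T.card := by simp [JetScheme.length, Z]
  lia

theorem exists_eval_ne_zero_forall_linearIndependent [Infinite K] {f : MvPolynomial (Fin 3) K}
    (hf : f ≠ 0) {S : Set (Fin 3 → K)} (hS : S.Finite) (h0 : 0 ∉ S) :
    ∃ q, MvPolynomial.eval q f ≠ 0 ∧ ∀ v ∈ S, LinearIndependent K ![v, q] := by
  have hex (v : Fin 3 → K) (hv : v ∈ S) : ∃ ℓ : Dual K (Fin 3 → K), ℓ ≠ 0 ∧ ℓ v = 0 := by
    obtain ⟨u, hu⟩ := exists_linearIndependent_pair_of_one_lt_finrank (R := K) (by simp)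
      (ne_of_mem_of_not_mem hv h0)
    obtain ⟨ℓ, hℓ⟩ := exists_linearMap_apply_eq hu (![0, 1] : Fin 2 → K)
    exact ⟨ℓ, fun h ↦ by simpa [h] using hℓ 1, hℓ 0⟩
  choose! ℓ hℓ using hex
  have hF : f * ∏ v ∈ hS.toFinset, linearForm (ℓ v) ≠ 0 :=
    mul_ne_zero hf (Finset.prod_ne_zero_iff.mpr fun v hv ↦
      linearForm_ne_zero (hℓ v (hS.mem_toFinset.mp hv)).1)
  obtain ⟨q, hq⟩ : ∃ q, MvPolynomial.eval q (f * ∏ v ∈ hS.toFinset, linearForm (ℓ v)) ≠ 0 := by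
    by_contra! h
    exact hF (MvPolynomial.funext fun q ↦ by rw [h q, map_zero])
  rw [map_mul, map_prod, mul_ne_zero_iff, Finset.prod_ne_zero_iff] at hq
  refine ⟨q, hq.1, fun v hv ↦ ?_⟩
  have hqv := hq.2 v (hS.mem_toFinset.mpr hv)
  rw [eval_linearForm] at hqv
  refine (LinearIndependent.pair_iff' fun h ↦ h0 (h ▸ hv)).mpr fun c hc ↦ hqv ?_
  rw [← hc, map_smul, (hℓ v hv).2, smul_zero]

theorem exists_dual_apply_eq_zero_forall_apply_ne_zero {V : Type*} [AddCommGroup V] [Module K V]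
    [Infinite K] {q : V} {S : Set V} (hS : S.Finite) (h : ∀ v ∈ S, LinearIndependent K ![v, q]) :
    ∃ φ : Dual K V, φ q = 0 ∧ ∀ v ∈ S, φ v ≠ 0 := by
  have := hS.to_subtype
  obtain ⟨φ, hφq, hφ⟩ := Module.Dual.exists_forall_mem_ne_zero_of_forall_exists
    (LinearMap.ker (Dual.eval K V q)) (fun v : S ↦ Dual.eval K V v) fun v ↦ by
      obtain ⟨φ, hφ⟩ := exists_linearMap_apply_eq (h v v.2) (![1, 0] : Fin 2 → K)
      exact ⟨φ, hφ 1, by simpa using (hφ 0).trans_ne one_ne_zero⟩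
  exact ⟨φ, hφq, fun v hv ↦ hφ ⟨v, hv⟩⟩

theorem exists_eq_mul_add_mul_of_isCoprime {F G H : K[X]} {a b n : ℕ} (hFG : IsCoprime F G)
    (hF : F.natDegree = a) (hG : G.natDegree ≤ b) (hH : H.natDegree ≤ n)
    (hab : a + b ≤ n + 1) (hF0 : F ≠ 0) :
    ∃ A B : K[X], A.natDegree ≤ n - a ∧ B.natDegree ≤ n - b ∧ H = A * F + B * G := by
  obtain ⟨u, v, huv⟩ := hFG
  have hB : (H * v % F).natDegree + 1 ≤ a ∨ H * v % F = 0 := by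
    rcases eq_or_ne F.natDegree 0 with h | h
    · right
      rw [Polynomial.eq_C_of_natDegree_eq_zero h] at hF0 ⊢
      exact EuclideanDomain.mod_eq_zero.mpr
        (Polynomial.isUnit_C.mpr (Polynomial.C_ne_zero.mp hF0).isUnit).dvd
    · left
      exact hF ▸ Polynomial.natDegree_mod_lt _ h
  have hBG : (H * v % F * G).natDegree ≤ n := by
    rcases hB with hB | hB
    · exact Polynomial.natDegree_mul_le.trans (by lia)
    · simp [hB]
  have hH' : H = (H * u + H * v / F * G) * F + H * v % F * G := by
    linear_combination H * (-huv) + G * (-(EuclideanDomain.div_add_mod (H * v) F))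
  refine ⟨_, _, ?_, ?_, hH'⟩
  · have hdeg : ((H * u + H * v / F * G) * F).natDegree ≤ n := by
      rw [eq_sub_of_add_eq hH'.symm]
      exact (Polynomial.natDegree_sub_le_of_le hH hBG).trans (max_self n).le
    rcases eq_or_ne (H * u + H * v / F * G) 0 with h | h
    · simp [h]
    · rw [Polynomial.natDegree_mul h hF0] at hdeg
      lia
  · rcases hB with hB | hB
    · lia
    · simp [hB]

theorem exists_eq_mul_add_mul_add_linearForm_mul [Infinite K] {φ : Dual K (Fin 3 → K)} (hφ : φ ≠ 0)
    {p q : Fin 3 → K} (hpq : LinearIndependent K ![p, q]) (hp : φ p = 0) (hq : φ q = 0)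
    {f g : MvPolynomial (Fin 3) K} {a b n : ℕ} (hf : f.IsHomogeneous a) (hg : g.IsHomogeneous b)
    (hfq : MvPolynomial.eval q f ≠ 0) (hfg : IsCoprime (lineRestrict p q f) (lineRestrict p q g))
    (ha : a ≤ n) (hb : b ≤ n) (hab : a + b ≤ n + 1) {h : MvPolynomial (Fin 3) K}
    (hh : h.IsHomogeneous n) :
    ∃ A B h', h'.IsHomogeneous (n - 1) ∧ h = A * f + B * g + linearForm φ * h' := by
  have htop : (lineRestrict p q f).coeff a ≠ 0 := by rwa [coeff_lineRestrict_top p q hf]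
  obtain ⟨A', B', hA', hB', hH⟩ := exists_eq_mul_add_mul_of_isCoprime hfg
    ((natDegree_lineRestrict_le p q hf).antisymm (Polynomial.le_natDegree_of_ne_zero htop))
    (natDegree_lineRestrict_le p q hg) (natDegree_lineRestrict_le p q hh) hab
    (ne_of_apply_ne (Polynomial.coeff · a) (by simpa using htop))
  obtain ⟨A, hA, rfl⟩ := exists_form_lineRestrict_eq hpq hA'
  obtain ⟨B, hB, rfl⟩ := exists_form_lineRestrict_eq hpq hB'
  have hhom : (h - (A * f + B * g)).IsHomogeneous n :=
    hh.sub (.add (Nat.sub_add_cancel ha ▸ hA.mul hf) (Nat.sub_add_cancel hb ▸ hB.mul hg))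
  obtain ⟨h', hh'⟩ := linearForm_dvd_of_lineRestrict_eq_zero hφ hpq hp hq hhom (by simp [hH])
  refine ⟨A, B, h', ?_, by rw [← hh']; ring⟩
  exact isHomogeneous_of_mul_left (hh' ▸ hhom) (isHomogeneous_linearForm φ) (linearForm_ne_zero hφ)

theorem exists_linearIndependent_pair_apply_eq_zero {φ : Dual K (Fin 3 → K)} {q : Fin 3 → K}
    (hq : φ q = 0) (hq0 : q ≠ 0) : ∃ p, φ p = 0 ∧ LinearIndependent K ![p, q] := by
  have hker : 1 < finrank K (LinearMap.ker φ) := by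
    have hrank := φ.finrank_range_add_finrank_ker
    have hle := (LinearMap.range φ).finrank_le
    simp only [Module.finrank_self, Module.finrank_fin_fun] at hrank hle
    lia
  obtain ⟨p, hp, hqp⟩ := exists_mem_linearIndependent_pair hker hq hq0
  exact ⟨p, hp, LinearIndependent.pair_symm_iff.mp hqp⟩

theorem exists_linearForm_regular [IsAlgClosed K] {f g : MvPolynomial (Fin 3) K} {a b : ℕ}
    (hf : f.IsHomogeneous a) (hg : g.IsHomogeneous b) (hf0 : f ≠ 0) (hg0 : g ≠ 0)
    (hfg : IsRelPrime f g) {S : Set (Fin 3 → K)} (hS : S.Finite) (h0 : 0 ∉ S) :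
    ∃ φ : Dual K (Fin 3 → K), (∀ v ∈ S, φ v ≠ 0) ∧
      ∀ n, a ≤ n → b ≤ n → a + b ≤ n + 1 → ∀ h : MvPolynomial (Fin 3) K, h.IsHomogeneous n →
        ∃ A B h', h'.IsHomogeneous (n - 1) ∧ h = A * f + B * g + linearForm φ * h' := by
  let S' := insert (Pi.single 0 1) S ∪ Projectivization.rep ''
    {x : ℙ K (Fin 3 → K) | MvPolynomial.eval x.rep f = 0 ∧ MvPolynomial.eval x.rep g = 0}
  have hS' : S'.Finite :=
    (hS.insert _).union ((finite_setOf_common_zero hf hg hf0 hg0 hfg).image _)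
  have h0' : 0 ∉ S' := by
    rintro ((h | h) | ⟨x, -, hx⟩)
    · simpa using congr_fun h 0
    · exact h0 h
    · exact x.rep_nonzero hx
  obtain ⟨q, hqf, hq⟩ := exists_eval_ne_zero_forall_linearIndependent hf0 hS' h0'
  obtain ⟨φ, hφq, hφ⟩ := exists_dual_apply_eq_zero_forall_apply_ne_zero hS' hq
  have hφ0 : φ ≠ 0 := by
    rintro rfl
    exact hφ (Pi.single 0 1) (.inl (.inl rfl)) rfl
  obtain ⟨p, hp, hpq⟩ := exists_linearIndependent_pair_apply_eq_zero hφq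
    ((hq _ (.inl (.inl rfl))).ne_zero 1)
  have hcop : IsCoprime (lineRestrict p q f) (lineRestrict p q g) := by
    rw [Polynomial.isCoprime_iff_aeval_ne_zero_of_isAlgClosed (k := K) K]
    intro t
    by_contra! h
    simp only [Polynomial.coe_aeval_eq_eval, eval_lineRestrict] at h
    have hv : p + t • q ≠ 0 := fun h ↦
      one_ne_zero (LinearIndependent.pair_iff.mp hpq 1 t (by rwa [one_smul])).1
    obtain ⟨c, hc⟩ := Projectivization.exists_smul_eq_mk_rep K _ hv
    rw [Units.smul_def] at hc
    refine hφ _ (.inr ⟨_, ⟨?_, ?_⟩, hc.symm⟩) (by simp [hp, hφq])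
    · rw [← hc, eval_smul_of_isHomogeneous hf, h.1, mul_zero]
    · rw [← hc, eval_smul_of_isHomogeneous hg, h.2, mul_zero]
  exact ⟨φ, fun v hv ↦ hφ v (.inl (.inr hv)), fun n ha hb hab h hh ↦
    exists_eq_mul_add_mul_add_linearForm_mul hφ0 hpq hp hφq hf hg hqf hcop ha hb hab hh⟩

end PlaneCurves

namespace JetScheme

variable {K ι : Type*} [Field K] (Z : JetScheme K (Fin 3) ι)

theorem choose_two_le_finrank_formImage_add {n r : ℕ}
    {V : Submodule K (MvPolynomial (Fin 3) K)} [Module.Finite K V] (hr : finrank K V ≤ r)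
    (hV : ∀ f : MvPolynomial (Fin 3) K, f.IsHomogeneous n → Z.toCoordRing f = 0 → f ∈ V) :
    (n + 2).choose 2 ≤ finrank K (Z.formImage n) + r := by
  let π := Z.toCoordRing.toLinearMap.domRestrict (MvPolynomial.homogeneousSubmodule (Fin 3) K n)
  have hle : (LinearMap.ker π).map (Submodule.subtype _) ≤ V := by
    rintro _ ⟨f, hf, rfl⟩
    exact hV f f.2 hf
  have hker := (Submodule.finrank_mono hle).trans hr
  rw [Submodule.finrank_map_subtype_eq] at hker
  have hrank := π.finrank_range_add_finrank_ker
  rw [LinearMap.range_domRestrict, finrank_homogeneousSubmodule_fin_three] at hrank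
  change finrank K (Z.formImage n) + _ = _ at hrank
  lia

variable [Fintype ι] {A : ι → K[X]} {d : ℕ}

theorem toCoordRing_eq_zero_of_forall_residue_eq_zero [IsAlgClosed K]
    (hA : ∀ c, (A c).coeff 0 ≠ 0)
    (hres : ∀ h : MvPolynomial (Fin 3) K, h.IsHomogeneous d → Z.residue A (Z.toCoordRing h) = 0)
    {u f g : MvPolynomial (Fin 3) K} {e a b : ℕ} (hu : u.IsHomogeneous e) (hf : f.IsHomogeneous a)
    (hg : g.IsHomogeneous b) (hf0 : f ≠ 0) (hg0 : g ≠ 0) (hfg : IsRelPrime f g)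
    (huf : Z.toCoordRing (u * f) = 0) (hug : Z.toCoordRing (u * g) = 0)
    (ha : a ≠ 0) (hb : b ≠ 0) (hdeg : a + b + e ≤ d + 2) (he : e ≤ d) : Z.toCoordRing u = 0 := by
  obtain ⟨φ, hφ, hreg⟩ := exists_linearForm_regular hf hg hf0 hg0 hfg
    (Set.finite_range Z.point) (by
      rintro ⟨c, hc⟩
      exact (Z.linearIndependent_point_dir c).ne_zero 0 hc)
  let π := Z.toCoordRing
  have hdescent (k : ℕ) (h : MvPolynomial (Fin 3) K) (hh : h.IsHomogeneous (d - e + k)) :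
      ∃ h₀ : MvPolynomial (Fin 3) K, h₀.IsHomogeneous (d - e) ∧
        π (u * h) = π (u * h₀) * π (linearForm φ) ^ k := by
    induction k generalizing h with
    | zero => exact ⟨h, hh, by simp⟩
    | succ k ih =>
      obtain ⟨s, t, h', hh', rfl⟩ := hreg _ (by lia) (by lia) (by lia) h hh
      obtain ⟨h₀, hh₀, heq⟩ := ih h' hh'
      refine ⟨h₀, hh₀, ?_⟩
      calc π (u * (s * f + t * g + linearForm φ * h'))
          = π s * π (u * f) + π t * π (u * g) + π (u * h') * π (linearForm φ) := by
            simp only [← map_mul, ← map_add]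
            congr 1
            ring
        _ = π (u * h₀) * π (linearForm φ) ^ (k + 1) := by
            rw [huf, hug, heq]
            ring
  refine Z.eq_zero_of_forall_residue_mul_eq_zero hA fun x ↦ ?_
  obtain ⟨h, hh, hhx⟩ : x * π (linearForm φ) ^ Z.length ∈ Z.formImage (d - e + Z.length) :=
    Z.formImage_eq_top (n := d - e + Z.length) (by lia) ▸ Submodule.mem_top
  have hφu : IsUnit (π (linearForm φ)) := Z.isUnit_toCoordRing fun c ↦ by simpa using hφ _ ⟨c, rfl⟩
  obtain ⟨h₀, hh₀, heq⟩ := hdescent _ h hh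
  have hux : π u * x = π (u * h₀) := (hφu.pow Z.length).mul_right_cancel <| by
    rw [mul_assoc, ← hhx, ← heq, map_mul]
    rfl
  rw [hux]
  exact hres _ (Nat.add_sub_cancel' he ▸ hu.mul hh₀)

theorem dvd_of_minimal_degree [IsAlgClosed K] (hA : ∀ c, (A c).coeff 0 ≠ 0)
    (hres : ∀ h : MvPolynomial (Fin 3) K, h.IsHomogeneous d → Z.residue A (Z.toCoordRing h) = 0)
    {f g : MvPolynomial (Fin 3) K} {a n : ℕ} (hg : g.IsHomogeneous a) (hg0 : g ≠ 0)
    (hgZ : Z.toCoordRing g = 0)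
    (hmin : ∀ e < a, ∀ u : MvPolynomial (Fin 3) K, u.IsHomogeneous e → Z.toCoordRing u = 0 → u = 0)
    (hf : f.IsHomogeneous n) (hfZ : Z.toCoordRing f = 0) (han : a ≤ n) (hn : 2 * n ≤ d + 2)
    (hnd : n ≤ d) : g ∣ f := by
  rcases eq_or_ne f 0 with rfl | hf0
  · exact dvd_zero g
  obtain ⟨f', g', u, hfg, rfl, rfl⟩ := UniqueFactorizationMonoid.exists_reduced_factors f hf0 g
  obtain ⟨hu0, hf'0⟩ := mul_ne_zero_iff.mp hf0
  have hg'0 := right_ne_zero_of_mul hg0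
  obtain ⟨e, α, rfl, hu, hf'⟩ := exists_isHomogeneous_of_mul hf hf0
  obtain ⟨e', β, rfl, hu', hg'⟩ := exists_isHomogeneous_of_mul hg hg0
  obtain rfl := hu'.inj_right hu hu0
  rcases eq_or_ne β 0 with rfl | hβ
  · rw [MvPolynomial.totalDegree_eq_zero_iff_eq_C.mp (Nat.le_zero.mp hg'.totalDegree_le)] at hg'0 ⊢
    have hC : IsUnit (MvPolynomial.C (σ := Fin 3) (g'.coeff 0)) :=
      (IsUnit.mk0 _ fun h ↦ hg'0 (by rw [h, map_zero])).map MvPolynomial.C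
    exact mul_dvd_mul_left u hC.dvd
  · exact absurd (hmin e' (by lia) u hu (Z.toCoordRing_eq_zero_of_forall_residue_eq_zero hA hres hu
      hf' hg' hf'0 hg'0 hfg hfZ hgZ (by lia) hβ (by lia) (by lia))) hu0

theorem three_mul_le_finrank_formImage [IsAlgClosed K] (hA : ∀ c, (A c).coeff 0 ≠ 0)
    (hres : ∀ h : MvPolynomial (Fin 3) K, h.IsHomogeneous d → Z.residue A (Z.toCoordRing h) = 0)
    (hconic : ∀ q : MvPolynomial (Fin 3) K, q.IsHomogeneous 2 → Z.toCoordRing q = 0 → q = 0)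
    {n : ℕ} (hn : 2 * n ≤ d + 2) (hnd : n ≤ d) : 3 * n ≤ finrank K (Z.formImage n) := by
  have hchoose : 3 * n ≤ (n + 2).choose 2 ∧
      (3 ≤ n → (n + 2).choose 2 = 3 * n + (n - 1).choose 2) := by
    rcases n with _ | _ | _ | n
    · simp
    · simp
    · decide
    · simp only [Nat.choose_succ_succ, Nat.choose_zero_right, Nat.succ_eq_add_one, zero_add,
        Nat.choose_one_right, Nat.reduceAdd, le_add_iff_nonneg_left, zero_le,
        add_tsub_cancel_right, forall_const]
      lia
  let P (e : ℕ) : Prop := ∃ f : MvPolynomial (Fin 3) K,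
    f.IsHomogeneous e ∧ Z.toCoordRing f = 0 ∧ f ≠ 0
  by_cases hex : P n
  · obtain ⟨a, ⟨g, hg, hgZ, hg0⟩, hmin⟩ : ∃ a, P a ∧ ∀ e, P e → a ≤ e := by
      classical
      exact ⟨_, Nat.find_spec ⟨n, hex⟩, fun e he ↦ Nat.find_min' _ he⟩
    have han := hmin n hex
    have ha : 3 ≤ a := by
      by_contra! ha
      have hq : MvPolynomial.X 0 ^ (2 - a) * g = 0 :=
        hconic _ (by simpa [show 2 - a + a = 2 by lia] using
          ((MvPolynomial.isHomogeneous_X K (0 : Fin 3)).pow (2 - a)).mul hg) (by simp [hgZ])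
      exact hg0 ((mul_eq_zero_iff_left (pow_ne_zero _ (MvPolynomial.X_ne_zero _))).mp hq)
    have hker : finrank K (multiples g (n - a)) ≤ (n - 1).choose 2 := by
      rw [finrank_multiples hg0]
      exact Nat.choose_le_choose 2 (by lia)
    have := Z.choose_two_le_finrank_formImage_add hker fun f hf hfZ ↦ by
      obtain ⟨h, rfl⟩ := Z.dvd_of_minimal_degree hA hres hg hg0 hgZ
        (fun e he u hu huZ ↦ by_contra fun hu0 ↦ he.not_ge (hmin e ⟨u, hu, huZ, hu0⟩))
        hf hfZ han hn hnd
      exact ⟨h, isHomogeneous_of_mul_left hf hg hg0, rfl⟩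
    have := hchoose.2 (by lia)
    lia
  · have := Z.choose_two_le_finrank_formImage_add (n := n) (V := ⊥) (finrank_bot K _).le
      fun f hf hfZ ↦ by_contra fun hf0 ↦ hex ⟨f, hf, hfZ, hf0⟩
    lia

theorem exists_conic_of_length_lt [IsAlgClosed K] (hA : ∀ c, (A c).coeff 0 ≠ 0)
    (hres : ∀ h : MvPolynomial (Fin 3) K, h.IsHomogeneous d → Z.residue A (Z.toCoordRing h) = 0)
    (hlt : Z.length < 3 * d) :
    ∃ q : MvPolynomial (Fin 3) K, q.IsHomogeneous 2 ∧ q ≠ 0 ∧ Z.toCoordRing q = 0 := by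
  by_contra! h
  have hconic (q : MvPolynomial (Fin 3) K) (hq : q.IsHomogeneous 2) (hqZ : Z.toCoordRing q = 0) :
      q = 0 := by_contra fun hq0 ↦ h q hq hq0 hqZ
  have hd : d / 2 + (d - d / 2) = d := by lia
  have h₁ := Z.three_mul_le_finrank_formImage hA hres hconic (n := d / 2) (by lia) (by lia)
  have h₂ := Z.three_mul_le_finrank_formImage hA hres hconic (n := d - d / 2) (by lia) (by lia)
  have := Z.finrank_formImage_add_le hA (hd.symm ▸ hres)
  lia

end JetScheme

section Veronese

variable {K : Type} [Field K] {m d : ℕ}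

theorem nu_apply (v : Fin (m + 1) → K) (f : Hd K m d) :
    nu d v f = MvPolynomial.eval v (f : PR K m) := by
  simp [nu, MvPolynomial.aeval_eq_eval]

theorem nu_smul (c : K) (v : Fin (m + 1) → K) : nu d (c • v) = c ^ d • nu d v := by
  ext f
  rw [LinearMap.smul_apply, nu_apply, nu_apply, eval_smul_of_isHomogeneous f.2, smul_eq_mul]

theorem nu_ne_zero {v : Fin (m + 1) → K} (hv : v ≠ 0) : nu d v ≠ 0 := by
  obtain ⟨i, hi⟩ := Function.ne_iff.mp hv
  have hX : (MvPolynomial.X i ^ d : PR K m).IsHomogeneous d := by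
    simpa using (MvPolynomial.isHomogeneous_X K i).pow d
  intro h
  have := LinearMap.congr_fun h ⟨_, hX⟩
  rw [nu_apply, map_pow, MvPolynomial.eval_X] at this
  exact pow_ne_zero d hi this

theorem span_nu_rep_mk {v : Fin (m + 1) → K} (hv : v ≠ 0) :
    Submodule.span K {nu d (Projectivization.mk K v hv).rep} = Submodule.span K {nu d v} := by
  obtain ⟨c, hc⟩ := Projectivization.exists_smul_eq_mk_rep K v hv
  rw [← hc, Units.smul_def, nu_smul,
    Submodule.span_singleton_smul_eq (IsUnit.mk0 _ (pow_ne_zero _ c.ne_zero))]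

/-- The Veronese embedding `ν_d`, as a map of projective spaces. -/
def veronese (d : ℕ) (a : Pm K m) : PN K m d :=
  Projectivization.mk K (nu d a.rep) (nu_ne_zero a.rep_nonzero)

theorem XSet_eq_range_veronese : XSet K m d = Set.range (veronese d) := by
  ext Q
  refine exists_congr fun a ↦ ?_
  rw [← Projectivization.submodule_injective.eq_iff, veronese, Projectivization.submodule_mk,
    eq_comm]

theorem mk_rep_mem_iff {V : Type*} [AddCommGroup V] [Module K V] {v : V} (hv : v ≠ 0)
    {W : Submodule K V} : (Projectivization.mk K v hv).rep ∈ W ↔ v ∈ W := by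
  obtain ⟨c, hc⟩ := Projectivization.exists_smul_eq_mk_rep K v hv
  rw [← hc, Units.smul_def, W.smul_mem_iff c.ne_zero]

theorem span_rep_image_veronese (S : Set (Pm K m)) :
    Submodule.span K (Projectivization.rep '' (veronese d '' S)) = dualSpan d S := by
  rw [dualSpan, Set.image_image]
  refine le_antisymm ?_ ?_ <;> rw [Submodule.span_le, Set.image_subset_iff] <;> intro a ha
  · exact (mk_rep_mem_iff _).mpr (Submodule.subset_span ⟨a, ha, rfl⟩)
  · exact (mk_rep_mem_iff (nu_ne_zero a.rep_nonzero)).mp (Submodule.subset_span ⟨a, ha, rfl⟩)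

/-- The functional `φ` is a linear combination of the Veronese images of at most `r` points. -/
def HasRankLE (r : ℕ) (φ : Dual K (Hd K m d)) : Prop :=
  ∃ T : Finset (Pm K m), T.card ≤ r ∧ φ ∈ dualSpan d (T : Set (Pm K m))

theorem HasRankLE.add {r r' : ℕ} {φ ψ : Dual K (Hd K m d)} (hφ : HasRankLE r φ)
    (hψ : HasRankLE r' ψ) : HasRankLE (r + r') (φ + ψ) := by
  classical
  obtain ⟨T, hT, hφT⟩ := hφ
  obtain ⟨T', hT', hψT'⟩ := hψ
  refine ⟨T ∪ T', (T.card_union_le T').trans (add_le_add hT hT'), add_mem ?_ ?_⟩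
  · exact Submodule.span_mono (Set.image_mono (by simp)) hφT
  · exact Submodule.span_mono (Set.image_mono (by simp)) hψT'

theorem hasRankLE_smul_nu (hd : d ≠ 0) (c : K) (v : Fin (m + 1) → K) :
    HasRankLE 1 (c • nu d v) := by
  rcases eq_or_ne v 0 with rfl | hv
  · refine ⟨∅, by simp, ?_⟩
    rw [← zero_smul K (0 : Fin (m + 1) → K), nu_smul, zero_pow hd, zero_smul, smul_zero]
    exact zero_mem _
  · refine ⟨{Projectivization.mk K v hv}, by simp, Submodule.smul_mem _ _ ?_⟩
    rw [dualSpan, Finset.coe_singleton, Set.image_singleton, span_nu_rep_mk]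
    exact Submodule.mem_span_singleton_self _

theorem hasRankLE_sum_smul_nu (hd : d ≠ 0) {J : Type*} (s : Finset J) (c : J → K)
    (x : J → Fin (m + 1) → K) : HasRankLE s.card (∑ j ∈ s, c j • nu d (x j)) := by
  classical
  induction s using Finset.induction_on with
  | empty => exact ⟨∅, by simp, by simp⟩
  | insert j s hj ih =>
    rw [Finset.sum_insert hj, Finset.card_insert_of_notMem hj, add_comm s.card]
    exact (hasRankLE_smul_nu hd _ _).add ih

theorem exists_finset_of_hasRankLE {r : ℕ} {φ : Dual K (Hd K m d)} (h : HasRankLE r φ) :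
    ∃ S : Finset (PN K m d), ↑S ⊆ XSet K m d ∧ S.card ≤ r ∧
      φ ∈ Submodule.span K (Projectivization.rep '' (S : Set (PN K m d))) := by
  classical
  obtain ⟨T, hT, hφ⟩ := h
  refine ⟨T.image (veronese d), ?_, Finset.card_image_le.trans hT, ?_⟩
  · rw [XSet_eq_range_veronese, Finset.coe_image]
    exact Set.image_subset_range _ _
  · rwa [Finset.coe_image, span_rep_image_veronese]

theorem hasRankLE_card {S : Finset (PN K m d)} (hS : ↑S ⊆ XSet K m d) {φ : Dual K (Hd K m d)}
    (hφ : φ ∈ Submodule.span K (Projectivization.rep '' (S : Set (PN K m d)))) :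
    HasRankLE S.card φ := by
  classical
  rw [XSet_eq_range_veronese, ← Set.image_univ] at hS
  obtain ⟨T, -, hinj, rfl⟩ := Finset.exists_subset_injOn_image_eq_of_surjOn _ _ hS
  rw [Finset.coe_image, span_rep_image_veronese] at hφ
  exact ⟨T, (Finset.card_image_of_injOn hinj).ge, hφ⟩

theorem srank_mk_eq {φ : Dual K (Hd K m d)} (hφ : φ ≠ 0) {n : ℕ} (hn : HasRankLE n φ)
    (hmin : ∀ r, HasRankLE r φ → n ≤ r) : srank d (Projectivization.mk K φ hφ) = n := by
  obtain ⟨S, hS, hcard, hφS⟩ := exists_finset_of_hasRankLE hn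
  have hle {S : Finset (PN K m d)} (hS : ↑S ⊆ XSet K m d)
      (hφS : φ ∈ Submodule.span K (Projectivization.rep '' (S : Set (PN K m d)))) :
      n ≤ S.card := hmin _ (hasRankLE_card hS hφS)
  refine IsLeast.csInf_eq ⟨⟨S, hS, hcard.antisymm (hle hS hφS), (mk_rep_mem_iff hφ).mpr hφS⟩, ?_⟩
  rintro _ ⟨S', hS', rfl, hφS'⟩
  exact hle hS' ((mk_rep_mem_iff hφ).mp hφS')

end Veronese

section PolynomialCurves

variable {K V : Type} [Field K] [AddCommGroup V] [Module K V]

/-- The curve `γ` in a vector space is given by polynomials in each linear coordinate. -/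
def IsPolynomialCurve (γ : K → V) : Prop :=
  ∀ ℓ : Dual K V, ∃ p : K[X], ∀ t, ℓ (γ t) = p.eval t

theorem isPolynomialCurve_const (v : V) : IsPolynomialCurve fun _ : K ↦ v :=
  fun ℓ ↦ ⟨.C (ℓ v), by simp⟩

theorem isPolynomialCurve_eval_smul (p : K[X]) (v : V) :
    IsPolynomialCurve fun t ↦ p.eval t • v :=
  fun ℓ ↦ ⟨p * .C (ℓ v), by simp⟩

theorem IsPolynomialCurve.add {γ δ : K → V} (hγ : IsPolynomialCurve γ)
    (hδ : IsPolynomialCurve δ) : IsPolynomialCurve fun t ↦ γ t + δ t := by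
  intro ℓ
  obtain ⟨p, hp⟩ := hγ ℓ
  obtain ⟨q, hq⟩ := hδ ℓ
  exact ⟨p + q, by simp [hp, hq]⟩

theorem isPolynomialCurve_sum {ι : Type*} {γ : ι → K → V} (s : Finset ι)
    (hγ : ∀ i, IsPolynomialCurve (γ i)) : IsPolynomialCurve fun t ↦ ∑ i ∈ s, γ i t := by
  intro ℓ
  choose p hp using fun i ↦ hγ i ℓ
  exact ⟨∑ i ∈ s, p i, by simp [hp, Polynomial.eval_finsetSum]⟩

theorem IsPolynomialCurve.exists_eval_eq {γ : K → V} (hγ : IsPolynomialCurve γ) (b : K)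
    {F : V → K} (hF : F ∈ polyFunctions K V) : ∃ p : K[X], ∀ t, F (b • γ t) = p.eval t := by
  induction hF using Algebra.adjoin_induction with
  | mem _ hg =>
    obtain ⟨ℓ, rfl⟩ := hg
    obtain ⟨p, hp⟩ := hγ ℓ
    exact ⟨.C b * p, by simp [hp]⟩
  | algebraMap r => exact ⟨.C r, by simp⟩
  | add f g _ _ hf hg =>
    obtain ⟨p, hp⟩ := hf
    obtain ⟨q, hq⟩ := hg
    exact ⟨p + q, by simp [hp, hq]⟩
  | mul f g _ _ hf hg =>
    obtain ⟨p, hp⟩ := hf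
    obtain ⟨q, hq⟩ := hg
    exact ⟨p * q, by simp [hp, hq]⟩

theorem mk_mem_zClosure_of_curve [Infinite K] {S : Set (ℙ K V)} {γ : K → V}
    (hγ : IsPolynomialCurve γ) (h0 : γ 0 ≠ 0)
    (hS : ∀ t ≠ 0, ∀ ht : γ t ≠ 0, Projectivization.mk K (γ t) ht ∈ S) :
    Projectivization.mk K (γ 0) h0 ∈ zClosure S := by
  intro F hF hFS c
  obtain ⟨ℓ, hℓ⟩ := not_forall.mp (mt (Module.forall_dual_apply_eq_zero_iff K _).mp h0)
  obtain ⟨p, hp⟩ := hγ ℓ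
  obtain ⟨u, hu⟩ := Projectivization.exists_smul_eq_mk_rep K _ h0
  obtain ⟨q, hq⟩ := hγ.exists_eval_eq (c * u) hF
  have hpq : Polynomial.X * p * q = 0 := by
    refine Polynomial.funext fun t ↦ ?_
    rw [Polynomial.eval_mul, Polynomial.eval_mul, Polynomial.eval_X, ← hp, ← hq,
      Polynomial.eval_zero]
    by_cases ht : t = 0
    · rw [ht, zero_mul, zero_mul]
    by_cases hγt : γ t = 0
    · rw [hγt, map_zero, mul_zero, zero_mul]
    obtain ⟨v, hv⟩ := Projectivization.exists_smul_eq_mk_rep K _ hγt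
    have hF0 := hFS _ (hS t ht hγt) (c * u * (v⁻¹ : Kˣ))
    rw [← hv, mul_smul, ← Units.smul_def, inv_smul_smul] at hF0
    rw [hF0, mul_zero]
  have hp0 : p ≠ 0 := by
    rintro rfl
    simp [hp] at hℓ
  have hq0 := (mul_eq_zero_iff_left (mul_ne_zero Polynomial.X_ne_zero hp0)).mp hpq
  rw [← hu, Units.smul_def, ← mul_smul, hq, hq0, Polynomial.eval_zero]

theorem det_mem_polyFunctions {n : ℕ} (M : Matrix (Fin n) (Fin n) (V →ₗ[K] K)) :
    (fun v ↦ (M.map (· v)).det) ∈ polyFunctions K V := by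
  have hdet : (fun v ↦ (M.map (· v)).det) =
      ∑ σ : Equiv.Perm (Fin n), (Equiv.Perm.sign σ : ℤ) • ∏ i, (⇑(M (σ i) i) : V → K) := by
    ext v
    simp [Matrix.det_apply, Units.smul_def]
  rw [hdet]
  exact Subalgebra.sum_mem _ fun σ _ ↦ Subalgebra.zsmul_mem _
    (Subalgebra.prod_mem _ fun i _ ↦ Algebra.subset_adjoin (Set.mem_ofPred.mpr ⟨M (σ i) i, rfl⟩)) _

end PolynomialCurves

section BorderRank

variable {K : Type} [Field K] {m d : ℕ}

theorem det_eq_zero_of_hasRankLE {n r : ℕ} {f g : Fin n → PR K m}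
    {M : Matrix (Fin n) (Fin n) (Hd K m d)} (hM : ∀ i j, (M i j : PR K m) = f i * g j)
    {φ : Dual K (Hd K m d)} (hφ : HasRankLE r φ) (hr : r < n) : (M.map φ).det = 0 := by
  obtain ⟨T, hT, hφT⟩ := hφ
  obtain ⟨c, rfl⟩ := Submodule.mem_span_image_finset_iff_exists_fun K |>.mp hφT
  have hmul : M.map ⇑(∑ a : T, c a • nu d a.1.rep) =
      Matrix.of (fun i (a : T) ↦ c a * MvPolynomial.eval a.1.rep (f i)) *
        Matrix.of fun (a : T) j ↦ MvPolynomial.eval a.1.rep (g j) := by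
    ext i j
    simp [Matrix.mul_apply, nu_apply, hM, mul_assoc]
  by_contra hdet
  rw [hmul] at hdet
  have hrank := Matrix.rank_of_isUnit _ ((Matrix.isUnit_iff_isUnit_det _).mpr (.mk0 _ hdet))
  have hle := hrank.symm.trans_le
    ((Matrix.rank_mul_le_left _ _).trans (Matrix.rank_le_card_width _))
  simp only [Fintype.card_fin, Fintype.card_coe] at hle
  lia

theorem le_of_mem_secantWrt {n s : ℕ} {f g : Fin n → PR K m}
    {M : Matrix (Fin n) (Fin n) (Hd K m d)} (hM : ∀ i j, (M i j : PR K m) = f i * g j)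
    {φ : Dual K (Hd K m d)} (hφ : φ ≠ 0) (hdet : (M.map φ).det ≠ 0)
    (hs : Projectivization.mk K φ hφ ∈ secantWrt (XSet K m d) s) : n ≤ s := by
  by_contra! hlt
  obtain ⟨u, hu⟩ := Projectivization.exists_smul_eq_mk_rep K φ hφ
  refine hdet ?_
  rw [eq_inv_smul_iff.mpr hu]
  refine hs _ (det_mem_polyFunctions (M.map fun h ↦ LinearMap.applyₗ h)) ?_ (u⁻¹ : Kˣ)
  rintro Q ⟨S, hS, hcard, hQ⟩ c
  exact det_eq_zero_of_hasRankLE hM (hasRankLE_card hS (Submodule.smul_mem _ c hQ))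
    (hcard.trans_lt hlt)

theorem brank_mk_eq [Infinite K] {s : ℕ} (hs : 0 < s) {f g : Fin s → PR K m}
    {M : Matrix (Fin s) (Fin s) (Hd K m d)} (hM : ∀ i j, (M i j : PR K m) = f i * g j)
    {γ : K → Dual K (Hd K m d)} (hγ : IsPolynomialCurve γ) (h0 : γ 0 ≠ 0)
    (hdet : (M.map (γ 0)).det ≠ 0) (hrank : ∀ t ≠ 0, HasRankLE s (γ t)) :
    brank d (Projectivization.mk K (γ 0) h0) = s := by
  refine IsLeast.csInf_eq ⟨⟨hs, ?_⟩, fun s' hs' ↦ le_of_mem_secantWrt hM h0 hdet hs'.2⟩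
  refine mk_mem_zClosure_of_curve hγ h0 fun t ht ht0 ↦ ?_
  obtain ⟨S, hS, hcard, hγS⟩ := exists_finset_of_hasRankLE (hrank t ht)
  exact ⟨S, hS, hcard, (mk_rep_mem_iff ht0).mpr hγS⟩

end BorderRank

section JetFunctionals

open scoped Matrix

variable {K : Type} [Field K] {m d n : ℕ} {p q : Fin (m + 1) → K}

/-- The functional taking a form of degree `d` to the `i`-th Taylor coefficient at `p` of its
restriction to the line through `p` and `q`. -/
def jetFunctional (d : ℕ) (p q : Fin (m + 1) → K) (i : ℕ) : Dual K (Hd K m d) :=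
  Polynomial.lcoeff K i ∘ₗ (lineRestrict p q).toLinearMap ∘ₗ (Hd K m d).subtype

theorem jetFunctional_apply (i : ℕ) (f : Hd K m d) :
    jetFunctional d p q i f = (lineRestrict p q (f : PR K m)).coeff i := rfl

theorem jetFunctional_zero : jetFunctional d p q 0 = nu d p := by
  ext f
  rw [jetFunctional_apply, coeff_zero_lineRestrict, nu_apply]

theorem jetFunctional_self : jetFunctional d p q d = nu d q := by
  ext f
  rw [jetFunctional_apply, coeff_lineRestrict_top p q f.2, nu_apply]

theorem nu_add_smul (x : K) :
    nu d (p + x • q) = ∑ i ∈ Finset.range (d + 1), x ^ i • jetFunctional d p q i := by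
  ext f
  have hdeg : (lineRestrict p q (f : PR K m)).natDegree < d + 1 :=
    Nat.lt_succ_of_le (natDegree_lineRestrict_le p q f.2)
  rw [nu_apply, ← eval_lineRestrict, Polynomial.eval_eq_sum_range' hdeg, LinearMap.sum_apply]
  exact Finset.sum_congr rfl fun i _ ↦ mul_comm _ _

theorem exists_sum_mul_pow_eq_mod {ω : K} (hω : IsPrimitiveRoot ω n) (hn : n ≠ 0)
    (β : ℕ → K) : ∃ c : Fin n → K, ∀ i, ∑ a, c a * (ω ^ (a : ℕ)) ^ i = β (i % n) := by
  have hdet : (Matrix.vandermonde fun a : Fin n ↦ ω ^ (a : ℕ)).det ≠ 0 :=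
    Matrix.det_vandermonde_ne_zero_iff.mpr fun a b h ↦ Fin.ext (hω.pow_inj a.2 b.2 h)
  obtain ⟨c, hc⟩ := Matrix.vecMul_surjective_iff_isUnit.mpr
    ((Matrix.isUnit_iff_isUnit_det _).mpr (.mk0 _ hdet)) fun j ↦ β j
  refine ⟨c, fun i ↦ ?_⟩
  rw [← congr_fun hc ⟨i % n, Nat.mod_lt _ (Nat.pos_of_ne_zero hn)⟩]
  refine Finset.sum_congr rfl fun a _ ↦ ?_
  change _ = c a * (ω ^ (a : ℕ)) ^ (i % n)
  rw [← pow_eq_pow_mod i (by rw [← pow_mul, pow_mul', hω.pow_eq_one, one_pow])]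

theorem hasRankLE_sum_jetFunctional {ω : K} (hω : IsPrimitiveRoot ω n) (hn : n ≠ 0) (hd : d ≠ 0)
    (β : ℕ → K) (x : K) : HasRankLE n
      (∑ i ∈ Finset.range (d + 1), (β (i % n) * x ^ i) • jetFunctional d p q i) := by
  obtain ⟨c, hc⟩ := exists_sum_mul_pow_eq_mod hω hn β
  convert hasRankLE_sum_smul_nu hd Finset.univ c fun a : Fin n ↦ p + (ω ^ (a : ℕ) * x) • q using 1
  · exact (Finset.card_fin n).symm
  simp only [nu_add_smul, Finset.smul_sum, smul_smul]
  rw [Finset.sum_comm]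
  refine Finset.sum_congr rfl fun i _ ↦ ?_
  rw [← Finset.sum_smul, ← hc, Finset.sum_mul]
  simp only [mul_pow, mul_assoc]

theorem mod_ne_of_lt_add {i j n : ℕ} (hij : i ≠ j) (hlt : i < j + n) : i % n ≠ j := by
  intro h
  have hdiv := Nat.mod_add_div i n
  rcases Nat.eq_zero_or_pos (i / n) with h0 | h0
  · exact hij (by simpa [h, h0] using hdiv.symm)
  · have := Nat.le_mul_of_pos_right n h0
    lia

theorem hasRankLE_jetFunctional {ω : K} (hω : IsPrimitiveRoot ω n) {j : ℕ} (hj : j < n)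
    (hjd : j ≤ d) (hd : d ≠ 0) (hlt : d < j + n) : HasRankLE n (jetFunctional d p q j) := by
  convert hasRankLE_sum_jetFunctional (p := p) (q := q) hω (by lia) hd (Pi.single j 1) 1 using 1
  rw [Finset.sum_eq_single_of_mem j (Finset.mem_range_succ_iff.mpr hjd), Nat.mod_eq_of_lt hj]
  · simp
  intro i hi hij
  have := Finset.mem_range.mp hi
  rw [Pi.single_eq_of_ne (mod_ne_of_lt_add hij (by lia)), zero_mul, zero_smul]

theorem hasRankLE_jetFunctional_add_nu {ω : K} (hω : IsPrimitiveRoot ω n) {j : ℕ} (hj : j < n)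
    (hd : j + n = d) : HasRankLE n (jetFunctional d p q j + nu d q) := by
  convert hasRankLE_sum_jetFunctional (p := p) (q := q) hω (by lia) (by lia : d ≠ 0)
    (Pi.single j 1) 1 using 1
  have hmod : d % n = j := by rw [← hd, Nat.add_mod_right, Nat.mod_eq_of_lt hj]
  rw [Finset.sum_range_succ, Finset.sum_eq_single_of_mem j (Finset.mem_range.mpr (by lia)),
    Nat.mod_eq_of_lt hj, hmod, jetFunctional_self]
  · simp
  intro i hi hij
  have := Finset.mem_range.mp hi
  rw [Pi.single_eq_of_ne (mod_ne_of_lt_add hij (by lia)), zero_mul, zero_smul]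

/-- The curve of functionals `∑ α_{i mod n} t^{i - i mod n} jet_i`. For `t ≠ 0` its members have
rank at most `n`, and for `t → 0` it degenerates to `∑_{j < n} α_j jet_j`. -/
def jetCurve (d n : ℕ) (α : ℕ → K) (p q : Fin (m + 1) → K) (t : K) : Dual K (Hd K m d) :=
  ∑ i ∈ Finset.range (d + 1), (α (i % n) * t ^ (i - i % n)) • jetFunctional d p q i

theorem isPolynomialCurve_jetCurve (α : ℕ → K) : IsPolynomialCurve (jetCurve d n α p q) :=
  isPolynomialCurve_sum _ fun i ↦ by
    simpa using isPolynomialCurve_eval_smul (.C (α (i % n)) * .X ^ (i - i % n))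
      (jetFunctional d p q i)

theorem jetCurve_zero (hn : n ≠ 0) (hnd : n ≤ d + 1) (α : ℕ → K) :
    jetCurve d n α p q 0 = ∑ j ∈ Finset.range n, α j • jetFunctional d p q j := by
  rw [jetCurve, ← Finset.sum_subset (Finset.range_subset_range.mpr hnd)]
  · refine Finset.sum_congr rfl fun i hi ↦ ?_
    simp [Nat.mod_eq_of_lt (Finset.mem_range.mp hi)]
  · intro i _ hi
    have := Nat.mod_lt i (Nat.pos_of_ne_zero hn)
    have := mt Finset.mem_range.mpr hi
    simp [zero_pow (show i - i % n ≠ 0 by lia)]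

theorem hasRankLE_jetCurve {ω : K} (hω : IsPrimitiveRoot ω n) (hn : n ≠ 0) (hd : d ≠ 0)
    (α : ℕ → K) {t : K} (ht : t ≠ 0) : HasRankLE n (jetCurve d n α p q t) := by
  convert hasRankLE_sum_jetFunctional (p := p) (q := q) hω hn hd (fun j ↦ α j * (t ^ j)⁻¹) t using 1
  refine Finset.sum_congr rfl fun i _ ↦ ?_
  rw [pow_sub₀ t ht (Nat.mod_le i n), mul_comm (t ^ i), mul_assoc]

end JetFunctionals

section TwoJets

open Polynomial (C X)

variable {K σ ι : Type*} [Field K]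

namespace JetScheme

/-- The jet scheme consisting of a jet of order `a` at `P none` in the direction `y`, a jet of
order `b` at `P (some none)` in the direction of the first point, and the reduced points
`P (some (some i))`. -/
def twoJets (a b : ℕ) (y : σ → K) (P : Option (Option ι) → σ → K)
    (hy : LinearIndependent K ![P none, y])
    (hP : Pairwise fun c c' ↦ LinearIndependent K ![P c, P c']) :
    JetScheme K σ (Option (Option ι)) where
  point := P
  dir := fun | none => y | some _ => P none
  order := fun | none => a | some none => b | some (some _) => 0
  linearIndependent_point_dir := fun | none => hy | some _ => hP (Option.some_ne_none _)
  linearIndependent_point := hP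

/-- Residue weights on `JetScheme.twoJets`, which add `α` and `β` times the evaluations at the
supports of the two jets to the residue functional. -/
def twoJetsWeight (a b : ℕ) (α β : K) (κ : ι → K) : Option (Option ι) → K[X]
  | none => 1 + C α * X ^ a
  | some none => 1 + C β * X ^ b
  | some (some i) => C (κ i)

theorem coeff_zero_twoJetsWeight_ne_zero {a b : ℕ} (ha : a ≠ 0) (hb : b ≠ 0) (α β : K) {κ : ι → K}
    (hκ : ∀ i, κ i ≠ 0) : ∀ c, (twoJetsWeight a b α β κ c).coeff 0 ≠ 0
  | none => by simp [twoJetsWeight, Polynomial.coeff_X_pow, ha.symm]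
  | some none => by simp [twoJetsWeight, Polynomial.coeff_X_pow, hb.symm]
  | some (some i) => by simpa [twoJetsWeight] using hκ i

variable [Fintype ι] {a b : ℕ} {y : σ → K} {P : Option (Option ι) → σ → K}
  (hy : LinearIndependent K ![P none, y])
  (hP : Pairwise fun c c' ↦ LinearIndependent K ![P c, P c'])

theorem length_twoJets : (twoJets a b y P hy hP).length = a + b + 2 + Fintype.card ι := by
  simp only [length, twoJets, Fintype.sum_option, zero_add, Finset.sum_const, Finset.card_univ,
    smul_eq_mul, mul_one]
  lia

theorem residue_twoJets (α β : K) (κ : ι → K) (f : MvPolynomial σ K) :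
    (twoJets a b y P hy hP).residue (twoJetsWeight a b α β κ)
        ((twoJets a b y P hy hP).toCoordRing f)
      = (lineRestrict (P none) y f).coeff a + α * MvPolynomial.eval (P none) f
        + ((lineRestrict (P (some none)) (P none) f).coeff b
          + β * MvPolynomial.eval (P (some none)) f)
        + ∑ i, κ i * MvPolynomial.eval (P (some (some i))) f := by
  have hcoeff (u : K[X]) (c : K) (k : ℕ) :
      ((1 + C c * X ^ k) * u).coeff k = u.coeff k + c * u.coeff 0 := by
    simp [add_mul, mul_assoc, Polynomial.coeff_X_pow_mul']
  rw [residue_toCoordRing, Fintype.sum_option, Fintype.sum_option]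
  simp [restrict, twoJets, twoJetsWeight, hcoeff, coeff_zero_lineRestrict, add_assoc]

end JetScheme

end TwoJets

section TwoJetFunctional

open Polynomial (C X)

variable {K : Type} [Field K] {ι : Type*} [Fintype ι] {m d w : ℕ} {o y o' : Fin (m + 1) → K}
  {x : ι → Fin (m + 1) → K}

/-- The functional whose class is the point of small border rank and large rank: the sum of
the jet of order `w` at `o` in the direction `y`, the jet of order `w - 1` at `o'` in the
direction `o`, and the evaluations at `o` and at the points `x i`. -/
def twoJetFunctional (d w : ℕ) (o y o' : Fin (m + 1) → K) (x : ι → Fin (m + 1) → K) :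
    Dual K (Hd K m d) :=
  jetFunctional d o y w + (jetFunctional d o' o (w - 1) + nu d o) + ∑ i, nu d (x i)

theorem hasRankLE_sum_nu (hd : d ≠ 0) (x : ι → Fin (m + 1) → K) :
    HasRankLE (Fintype.card ι) (∑ i, nu d (x i)) := by
  simpa using hasRankLE_sum_smul_nu hd Finset.univ (1 : ι → K) x

theorem hasRankLE_twoJetFunctional {ω : K} (hω : IsPrimitiveRoot ω (d + 1 - w)) (hw : w ≠ 0)
    (hd : 2 * w ≤ d) : HasRankLE (2 * (d + 1 - w) + Fintype.card ι)
      (twoJetFunctional d w o y o' x) := by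
  rw [two_mul]
  exact ((hasRankLE_jetFunctional hω (by lia) (by lia) (by lia) (by lia)).add
    (hasRankLE_jetFunctional_add_nu hω (by lia) (by lia))).add (hasRankLE_sum_nu (by lia) x)

/-- A polynomial curve of functionals of rank at most `2 * w + 1 + #ι` degenerating to
`twoJetFunctional`. -/
def twoJetCurve (d w : ℕ) (o y o' : Fin (m + 1) → K) (x : ι → Fin (m + 1) → K) (t : K) :
    Dual K (Hd K m d) :=
  jetCurve d (w + 1) (Pi.single 0 1 + Pi.single w 1) o y t
    + jetCurve d w (Pi.single (w - 1) 1) o' o t + ∑ i, nu d (x i)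

theorem isPolynomialCurve_twoJetCurve : IsPolynomialCurve (twoJetCurve d w o y o' x) :=
  ((isPolynomialCurve_jetCurve _).add (isPolynomialCurve_jetCurve _)).add
    (isPolynomialCurve_const _)

theorem twoJetCurve_zero (hw : w ≠ 0) (hd : w ≤ d) :
    twoJetCurve d w o y o' x 0 = twoJetFunctional d w o y o' x := by
  have hsingle {n j : ℕ} (hj : j < n) (p q : Fin (m + 1) → K) :
      ∑ i ∈ Finset.range n, (Pi.single j 1 : ℕ → K) i • jetFunctional d p q i =
        jetFunctional d p q j := by
    simp [Pi.single_apply, hj]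
  rw [twoJetCurve, jetCurve_zero (by lia) (by lia), jetCurve_zero hw (by lia), twoJetFunctional]
  simp only [Pi.add_apply, add_smul, Finset.sum_add_distrib]
  rw [hsingle (by lia), hsingle (by lia), hsingle (by lia), jetFunctional_zero]
  abel

theorem hasRankLE_twoJetCurve {ω ω' : K} (hω : IsPrimitiveRoot ω (w + 1))
    (hω' : IsPrimitiveRoot ω' w) (hw : w ≠ 0) (hd : d ≠ 0) {t : K} (ht : t ≠ 0) :
    HasRankLE (2 * w + 1 + Fintype.card ι) (twoJetCurve d w o y o' x t) := by
  rw [show 2 * w + 1 = w + 1 + w by lia]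
  exact ((hasRankLE_jetCurve hω (by lia) hd _ ht).add (hasRankLE_jetCurve hω' hw hd _ ht)).add
    (hasRankLE_sum_nu hd x)

theorem exists_gram_twoJetFunctional (hw : 2 ≤ w) (hd : 4 * w + 2 * Fintype.card ι + 1 ≤ d)
    {P : Option (Option ι) → Fin (m + 1) → K} (hy : LinearIndependent K ![P none, y])
    (hP : Pairwise fun c c' ↦ LinearIndependent K ![P c, P c']) :
    ∃ (f g : Fin (2 * w + 1 + Fintype.card ι) → PR K m) (M : Matrix _ _ (Hd K m d)),
      (∀ i j, (M i j : PR K m) = f i * g j) ∧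
      M.map (twoJetFunctional d w (P none) y (P (some none)) fun i ↦ P (some (some i))) = 1 := by
  have hlen := JetScheme.length_twoJets (a := w) (b := w - 1) hy hP
  rw [show w + (w - 1) + 2 = 2 * w + 1 by lia] at hlen
  obtain ⟨f, g, hf, hg, hfg⟩ := (JetScheme.twoJets w (w - 1) y P hy hP).exists_forms_gram_eq_one
    (JetScheme.coeff_zero_twoJetsWeight_ne_zero (a := w) (b := w - 1) (by lia) (by lia) 1 0
      fun _ ↦ one_ne_zero)
    (n := 2 * w + Fintype.card ι) (n' := d - (2 * w + Fintype.card ι)) (by lia) (by lia)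
  rw [← hlen]
  refine ⟨f, g, .of fun i j ↦ ⟨f i * g j, ?_⟩, fun i j ↦ rfl, ?_⟩
  · simpa [show 2 * w + Fintype.card ι + (d - (2 * w + Fintype.card ι)) = d by lia]
      using (hf i).mul (hg j)
  rw [← hfg]
  ext i j
  rw [Matrix.map_apply, Matrix.of_apply, Matrix.of_apply, JetScheme.residue_twoJets]
  simp only [twoJetFunctional, LinearMap.add_apply, jetFunctional_apply, nu_apply,
    LinearMap.sum_apply, map_mul, one_mul, zero_mul, add_zero]
  ring

theorem brank_mk_twoJetFunctional [IsAlgClosed K] [CharZero K] (hw : 2 ≤ w)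
    (hd : 4 * w + 2 * Fintype.card ι + 1 ≤ d) {P : Option (Option ι) → Fin (m + 1) → K}
    (hy : LinearIndependent K ![P none, y])
    (hP : Pairwise fun c c' ↦ LinearIndependent K ![P c, P c'])
    (h0 : twoJetFunctional d w (P none) y (P (some none)) (fun i ↦ P (some (some i))) ≠ 0) :
    brank d (Projectivization.mk K _ h0) = 2 * w + 1 + Fintype.card ι := by
  obtain ⟨f, g, M, hM, hgram⟩ := exists_gram_twoJetFunctional hw hd hy hP
  have := NeZero.mk (show w ≠ 0 by lia)
  obtain ⟨ω, hω⟩ := HasEnoughRootsOfUnity.exists_primitiveRoot K (w + 1)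
  obtain ⟨ω', hω'⟩ := HasEnoughRootsOfUnity.exists_primitiveRoot K w
  have hγ0 := twoJetCurve_zero (o := P none) (y := y) (o' := P (some none))
    (x := fun i ↦ P (some (some i))) (NeZero.ne w) (show w ≤ d by lia)
  have hdet : (M.map (twoJetFunctional d w (P none) y (P (some none))
    fun i ↦ P (some (some i)))).det ≠ 0 := by simp [hgram]
  rw! [← hγ0] at h0 hdet ⊢
  exact brank_mk_eq (by lia) hM isPolynomialCurve_twoJetCurve h0 hdet
    fun t ht ↦ hasRankLE_twoJetCurve hω hω' (NeZero.ne w) (by lia) ht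

end TwoJetFunctional

section JetRelation

open Polynomial (C X)

theorem exists_form_X_pow_dvd_lineRestrict {K σ : Type*} [Field K] [Finite σ] {p q : σ → K}
    (hpq : LinearIndependent K ![p, q]) {S : Finset (ℙ K (σ → K))}
    (hS : ∀ a ∈ S, LinearIndependent K ![p, a.rep]) {j n : ℕ} (hn : j + S.card ≤ n) :
    ∃ g : MvPolynomial σ K, g.IsHomogeneous n ∧ X ^ j ∣ lineRestrict p q g ∧
      (lineRestrict p q g).coeff j = 1 ∧ ∀ a ∈ S, MvPolynomial.eval a.rep g = 0 := by
  classical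
  have := Fintype.ofFinite σ
  obtain ⟨ξ, hξ⟩ := exists_linearMap_apply_eq hpq (![0, 1] : Fin 2 → K)
  obtain ⟨η, hη⟩ := exists_linearMap_apply_eq hpq (![1, 0] : Fin 2 → K)
  have hex (a : ℙ K (σ → K)) : ∃ ℓ : Dual K (σ → K), a ∈ S → ℓ p = 1 ∧ ℓ a.rep = 0 := by
    by_cases ha : a ∈ S
    · obtain ⟨ℓ, hℓ⟩ := exists_linearMap_apply_eq (hS a ha) (![1, 0] : Fin 2 → K)
      exact ⟨ℓ, fun _ ↦ ⟨hℓ 0, hℓ 1⟩⟩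
    · exact ⟨0, fun h ↦ absurd h ha⟩
  choose ℓ hℓ using hex
  let h := linearForm η ^ (n - (j + S.card)) * ∏ a ∈ S, linearForm (ℓ a)
  have hX : lineRestrict p q (linearForm ξ ^ j * h) = lineRestrict p q h * X ^ j := by
    have hξp : ξ p = 0 := hξ 0
    have hξq : ξ q = 1 := hξ 1
    rw [map_mul, map_pow, lineRestrict_linearForm, hξp, hξq, map_zero, zero_add, map_one, one_mul,
      mul_comm]
  have hhom : (linearForm ξ ^ j * h).IsHomogeneous n := by
    have := ((isHomogeneous_linearForm ξ).pow j).mul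
      (((isHomogeneous_linearForm η).pow (n - (j + S.card))).mul
        (.prod S _ _ fun a _ ↦ isHomogeneous_linearForm (ℓ a)))
    convert this using 1
    simp only [one_mul, Finset.sum_const, smul_eq_mul, mul_one]
    lia
  refine ⟨linearForm ξ ^ j * h, hhom, hX ▸ Dvd.intro_left _ rfl, ?_, fun a ha ↦ ?_⟩
  · have hηp : η p = 1 := hη 0
    rw [hX, Polynomial.coeff_mul_X_pow', if_pos le_rfl, Nat.sub_self, coeff_zero_lineRestrict]
    simp only [h, map_mul, map_pow, map_prod, eval_linearForm, hηp, one_pow, one_mul]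
    exact Finset.prod_eq_one fun a ha ↦ (hℓ a ha).1
  · simp only [h, map_mul, map_prod, eval_linearForm]
    rw [Finset.prod_eq_zero (f := fun b ↦ ℓ b a.rep) ha (hℓ a ha).2, mul_zero, mul_zero]

theorem lt_add_card_of_forall_coeff_lineRestrict_eq_zero {K σ : Type*} [Field K] [Finite σ]
    {p q : σ → K} (hpq : LinearIndependent K ![p, q]) {S : Finset (ℙ K (σ → K))}
    (hS : ∀ a ∈ S, LinearIndependent K ![p, a.rep]) {j n : ℕ} (hj : j ≠ 0)
    (h : ∀ g : MvPolynomial σ K, g.IsHomogeneous n → MvPolynomial.eval p g = 0 →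
      (∀ a ∈ S, MvPolynomial.eval a.rep g = 0) → (lineRestrict p q g).coeff j = 0) :
    n < j + S.card := by
  by_contra! hle
  obtain ⟨g, hg, hdvd, hcoeff, hgS⟩ := exists_form_X_pow_dvd_lineRestrict hpq hS hle
  refine one_ne_zero (hcoeff.symm.trans (h g hg ?_ hgS))
  rw [← coeff_zero_lineRestrict p q]
  exact Polynomial.X_pow_dvd_iff.mp hdvd 0 (Nat.pos_of_ne_zero hj)

variable {K : Type} [Field K]

/-- The coordinate points of the projective plane. -/
def coordPoint (i : Fin 3) : Pm K 2 :=
  Projectivization.mk K (Pi.single i 1) (Pi.single_ne_zero_iff.mpr one_ne_zero)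

theorem coordPoint_rep_apply {i j : Fin 3} (h : j ≠ i) : (coordPoint i : Pm K 2).rep j = 0 := by
  obtain ⟨u, hu⟩ := Projectivization.exists_smul_eq_mk_rep K (Pi.single i 1 : Fin 3 → K)
    (Pi.single_ne_zero_iff.mpr one_ne_zero)
  rw [coordPoint, ← hu, Pi.smul_apply, Pi.single_eq_of_ne h, smul_zero]

theorem linearIndependent_single_rep_iff {i : Fin 3} {a : Pm K 2} :
    LinearIndependent K ![Pi.single i 1, a.rep] ↔ a ≠ coordPoint i := by
  rw [linearIndependent_pair_iff_mk_ne (Pi.single_ne_zero_iff.mpr one_ne_zero) a.rep_nonzero,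
    a.mk_rep, ne_comm, coordPoint]

theorem linearIndependent_single_single {i j : Fin 3} (h : i ≠ j) :
    LinearIndependent K ![(Pi.single i 1 : Fin 3 → K), Pi.single j 1] := by
  refine LinearIndependent.pair_iff.mpr fun s t hst ↦ ⟨?_, ?_⟩
  · simpa [h] using congr_fun hst i
  · simpa [h.symm] using congr_fun hst j

theorem linearForm_proj {σ : Type*} [Fintype σ] [DecidableEq σ] (i : σ) :
    linearForm (LinearMap.proj i : Dual K (σ → K)) = MvPolynomial.X i := by
  simp [linearForm, Pi.single_apply, ite_mul]

theorem lineRestrict_X {σ : Type*} (p q : σ → K) (i : σ) :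
    lineRestrict p q (MvPolynomial.X i) = C (p i) + C (q i) * X :=
  MvPolynomial.aeval_X _ i

theorem X_dvd_of_lineRestrict_single_eq_zero [Infinite K] {i j k : Fin 3} (hij : i ≠ j)
    (hik : i ≠ k) (hjk : j ≠ k) {f : MvPolynomial (Fin 3) K} {n : ℕ} (hf : f.IsHomogeneous n)
    (h : lineRestrict (Pi.single j 1) (Pi.single k 1) f = 0) : MvPolynomial.X i ∣ f := by
  rw [← linearForm_proj]
  refine linearForm_dvd_of_lineRestrict_eq_zero ?_ (linearIndependent_single_single hjk)
    (Pi.single_eq_of_ne hij 1) (Pi.single_eq_of_ne hik 1) hf h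
  intro h
  exact one_ne_zero (α := K) (by simpa using LinearMap.congr_fun h (Pi.single i 1))

theorem eq_C_mul_X_mul_X_of_X_pow_dvd [Infinite K] {q : MvPolynomial (Fin 3) K}
    (hq : q.IsHomogeneous 2) (h₁ : X ^ 3 ∣ lineRestrict (Pi.single 0 1) (Pi.single 1 1) q)
    (h₂ : X ^ 2 ∣ lineRestrict (Pi.single 2 1) (Pi.single 0 1) q) :
    ∃ c : K, q = MvPolynomial.X 2 * (MvPolynomial.X 1 * MvPolynomial.C c) := by
  have hdeg (p p' : Fin 3 → K) : (lineRestrict p p' q).natDegree < 3 :=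
    Nat.lt_succ_of_le (natDegree_lineRestrict_le p p' hq)
  have hD : lineRestrict (Pi.single 0 1) (Pi.single 1 1) q = 0 :=
    Polynomial.eq_zero_of_dvd_of_natDegree_lt h₁ (by simpa using hdeg _ _)
  have hR : lineRestrict (Pi.single 2 1) (Pi.single 0 1) q = 0 := by
    refine Polynomial.eq_zero_of_dvd_of_natDegree_lt (p := X ^ 3) ?_ (by simpa using hdeg _ _)
    refine Polynomial.X_pow_dvd_iff.mpr fun i hi ↦ ?_
    obtain hi | rfl : i < 2 ∨ i = 2 := by lia
    · exact Polynomial.X_pow_dvd_iff.mp h₂ i hi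
    · rw [coeff_lineRestrict_top _ _ hq, ← coeff_zero_lineRestrict (Pi.single 0 1)
        (Pi.single 1 1), hD, Polynomial.coeff_zero]
  obtain ⟨q, rfl⟩ :=
    X_dvd_of_lineRestrict_single_eq_zero (i := 2) (by decide) (by decide) (by decide) hq hD
  have hq₁ : q.IsHomogeneous 1 :=
    isHomogeneous_of_mul_left hq (MvPolynomial.isHomogeneous_X K 2) (MvPolynomial.X_ne_zero 2)
  have hR₁ : lineRestrict (Pi.single 2 1) (Pi.single 0 1) q = 0 := by
    simpa [lineRestrict_X] using hR
  obtain ⟨q, rfl⟩ :=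
    X_dvd_of_lineRestrict_single_eq_zero (i := 1) (by decide) (by decide) (by decide) hq₁ hR₁
  have hq₀ : q.IsHomogeneous 0 :=
    isHomogeneous_of_mul_left hq₁ (MvPolynomial.isHomogeneous_X K 1) (MvPolynomial.X_ne_zero 1)
  exact ⟨q.coeff 0, by rw [← MvPolynomial.totalDegree_eq_zero_iff_eq_C.mp
    ((MvPolynomial.totalDegree_zero_iff_isHomogeneous _).mpr hq₀)]⟩

/-- Linear relations in degree `d` between the jets of `twoJetFunctional` at the coordinate
points of the plane and the evaluations at finitely many points, with coefficients `κ`. -/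
def IsJetRelation (d w : ℕ) (κ : Pm K 2 →₀ K) : Prop :=
  jetFunctional d (Pi.single 0 1) (Pi.single 1 1) w
    + jetFunctional d (Pi.single 2 1) (Pi.single 0 1) (w - 1)
    + Finsupp.linearCombination K (fun a : Pm K 2 ↦ nu d a.rep) κ = 0

variable {d w : ℕ} {κ : Pm K 2 →₀ K}

theorem IsJetRelation.apply_eq_zero (hκ : IsJetRelation d w κ) {f : MvPolynomial (Fin 3) K}
    (hf : f.IsHomogeneous d) :
    (lineRestrict (Pi.single 0 1) (Pi.single 1 1) f).coeff w
      + (lineRestrict (Pi.single 2 1) (Pi.single 0 1) f).coeff (w - 1)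
      + ∑ a ∈ κ.support, κ a * MvPolynomial.eval a.rep f = 0 := by
  simpa [Finsupp.linearCombination_apply, Finsupp.sum, jetFunctional_apply, nu_apply]
    using LinearMap.congr_fun hκ ⟨f, hf⟩

theorem IsJetRelation.lt_add_card_filter_one [DecidableEq K] (hκ : IsJetRelation d w κ)
    (hw : 2 ≤ w) (hd : d ≠ 0) : d < w + (κ.support.filter fun a ↦ a.rep 1 ≠ 0).card := by
  have h := lt_add_card_of_forall_coeff_lineRestrict_eq_zero (n := d - 1) (j := w - 1)
    (linearIndependent_single_single (K := K) zero_ne_one)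
    (S := κ.support.filter fun a ↦ a.rep 1 ≠ 0) ?_ (by lia) ?_
  · lia
  · intro a ha
    rw [linearIndependent_single_rep_iff]
    rintro rfl
    exact (Finset.mem_filter.mp ha).2 (coordPoint_rep_apply one_ne_zero)
  · intro g hg _ hgS
    have hrel := hκ.apply_eq_zero (f := MvPolynomial.X 1 * g) (by
      simpa [show 1 + (d - 1) = d by lia] using (MvPolynomial.isHomogeneous_X K 1).mul hg)
    have hsum (a) (ha : a ∈ κ.support) :
        κ a * MvPolynomial.eval a.rep (MvPolynomial.X 1 * g) = 0 := by
      by_cases h1 : a.rep 1 = 0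
      · simp [h1]
      · simp [hgS a (Finset.mem_filter.mpr ⟨ha, h1⟩)]
    obtain ⟨w, rfl⟩ := Nat.exists_eq_add_of_le' (show 1 ≤ w by lia)
    rw [Finset.sum_eq_zero hsum] at hrel
    simpa [lineRestrict_X, Polynomial.coeff_X_mul] using hrel

theorem IsJetRelation.lt_add_card_filter_two [DecidableEq K] [DecidableEq (Pm K 2)]
    (hκ : IsJetRelation d w κ) (hw : 2 ≤ w) (hd : d ≠ 0) :
    d < w + (κ.support.filter fun a ↦ a.rep 2 ≠ 0 ∧ a ≠ coordPoint 2).card := by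
  have h := lt_add_card_of_forall_coeff_lineRestrict_eq_zero (n := d - 1) (j := w - 1)
    (linearIndependent_single_single (K := K) (i := 2) (j := 0) (by decide))
    (S := κ.support.filter fun a ↦ a.rep 2 ≠ 0 ∧ a ≠ coordPoint 2)
    (fun a ha ↦ linearIndependent_single_rep_iff.mpr (Finset.mem_filter.mp ha).2.2) (by lia) ?_
  · lia
  · intro g hg hg2 hgS
    have hrel := hκ.apply_eq_zero (f := MvPolynomial.X 2 * g) (by
      simpa [show 1 + (d - 1) = d by lia] using (MvPolynomial.isHomogeneous_X K 2).mul hg)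
    have hsum (a) (ha : a ∈ κ.support) :
        κ a * MvPolynomial.eval a.rep (MvPolynomial.X 2 * g) = 0 := by
      by_cases h2 : a.rep 2 = 0
      · simp [h2]
      by_cases h : a = coordPoint 2
      · obtain ⟨c, hc⟩ := Projectivization.exists_smul_eq_mk_rep K (Pi.single 2 1 : Fin 3 → K)
          (Pi.single_ne_zero_iff.mpr one_ne_zero)
        rw [map_mul, h, coordPoint, ← hc, Units.smul_def, eval_smul_of_isHomogeneous hg, hg2]
        simp
      · simp [hgS a (Finset.mem_filter.mpr ⟨ha, h2, h⟩)]
    rw [Finset.sum_eq_zero hsum] at hrel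
    simpa [lineRestrict_X] using hrel

theorem exists_nu_rep_mk_eq_smul {m : ℕ} (d : ℕ) {v : Fin (m + 1) → K} (hv : v ≠ 0) :
    ∃ c : K, c ≠ 0 ∧ nu d (Projectivization.mk K v hv).rep = c • nu d v := by
  obtain ⟨u, hu⟩ := Projectivization.exists_smul_eq_mk_rep K v hv
  exact ⟨u ^ d, pow_ne_zero d u.ne_zero, by rw [← hu, Units.smul_def, nu_smul]⟩

theorem exists_nu_coordPoint_rep_eq_smul (d : ℕ) (i : Fin 3) :
    ∃ c : K, c ≠ 0 ∧ nu d (coordPoint i : Pm K 2).rep = c • nu d (Pi.single i 1) :=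
  exists_nu_rep_mk_eq_smul d (Pi.single_ne_zero_iff.mpr one_ne_zero)

theorem IsJetRelation.exists_forall_add_sum_eq_zero (hκ : IsJetRelation d w κ) :
    ∃ α β : K, ∀ f : MvPolynomial (Fin 3) K, f.IsHomogeneous d →
      (lineRestrict (Pi.single 0 1) (Pi.single 1 1) f).coeff w
        + α * MvPolynomial.eval (Pi.single 0 1) f
        + ((lineRestrict (Pi.single 2 1) (Pi.single 0 1) f).coeff (w - 1)
          + β * MvPolynomial.eval (Pi.single 2 1) f)
        + ∑ a : ((κ.erase (coordPoint 0)).erase (coordPoint 2)).support,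
          κ a * MvPolynomial.eval a.1.rep f = 0 := by
  classical
  obtain ⟨c, -, hc⟩ := exists_nu_coordPoint_rep_eq_smul (K := K) d 0
  obtain ⟨c', -, hc'⟩ := exists_nu_coordPoint_rep_eq_smul (K := K) d 2
  set κ' := κ.erase (coordPoint 0)
  refine ⟨κ (coordPoint 0) * c, κ' (coordPoint 2) * c', fun f hf ↦ ?_⟩
  have hrel := hκ.apply_eq_zero hf
  have hsum (a : (κ'.erase (coordPoint 2)).support) : κ a = κ'.erase (coordPoint 2) a := by
    have ha := a.2
    simp only [κ', Finsupp.support_erase, Finset.mem_erase] at ha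
    rw [Finsupp.erase_ne ha.1, Finsupp.erase_ne ha.2.1]
  have hsplit (κ : Pm K 2 →₀ K) (b : Pm K 2) :
      κ.sum (fun a x ↦ x * MvPolynomial.eval a.rep f) = κ b * MvPolynomial.eval b.rep f +
        (κ.erase b).sum fun a x ↦ x * MvPolynomial.eval a.rep f :=
    (Finsupp.add_sum_erase' κ b (fun a x ↦ x * MvPolynomial.eval a.rep f) fun _ ↦ zero_mul _).symm
  have h0 : MvPolynomial.eval (coordPoint 0).rep f = c * MvPolynomial.eval (Pi.single 0 1) f := by
    simpa [nu_apply] using LinearMap.congr_fun hc ⟨f, hf⟩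
  have h2 : MvPolynomial.eval (coordPoint 2).rep f = c' * MvPolynomial.eval (Pi.single 2 1) f := by
    simpa [nu_apply] using LinearMap.congr_fun hc' ⟨f, hf⟩
  change _ + κ.sum (fun a x ↦ x * MvPolynomial.eval a.rep f) = 0 at hrel
  rw [hsplit κ, hsplit κ' (coordPoint 2), h0, h2, Finsupp.sum] at hrel
  simp_rw [hsum]
  rw [Finset.sum_coe_sort _ fun a ↦ κ'.erase (coordPoint 2) a * MvPolynomial.eval a.rep f]
  linear_combination hrel

/-- Representatives of the point `(1 : 0 : 0)`, the point `(0 : 0 : 1)` and the points `x i`. -/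
def coordPointsRep {ι : Type*} (x : ι → Pm K 2) : Option (Option ι) → Fin 3 → K
  | none => Pi.single 0 1
  | some none => Pi.single 2 1
  | some (some i) => (x i).rep

theorem pairwise_linearIndependent_coordPointsRep {ι : Type*} {x : ι → Pm K 2}
    (hx : Function.Injective x) (hx0 : ∀ i, x i ≠ coordPoint 0) (hx2 : ∀ i, x i ≠ coordPoint 2) :
    Pairwise fun c c' ↦ LinearIndependent K ![coordPointsRep x c, coordPointsRep x c'] := by
  have hsymm {a b : Fin 3 → K} (h : LinearIndependent K ![a, b]) : LinearIndependent K ![b, a] :=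
    LinearIndependent.pair_symm_iff.mp h
  rintro (_ | _ | i) (_ | _ | j) hne
  · exact absurd rfl hne
  · exact linearIndependent_single_single (by decide)
  · exact linearIndependent_single_rep_iff.mpr (hx0 j)
  · exact linearIndependent_single_single (by decide)
  · exact absurd rfl hne
  · exact linearIndependent_single_rep_iff.mpr (hx2 j)
  · exact hsymm (linearIndependent_single_rep_iff.mpr (hx0 i))
  · exact hsymm (linearIndependent_single_rep_iff.mpr (hx2 i))
  · exact linearIndependent_rep_pair (hx.ne fun h ↦ hne (by rw [h]))

theorem IsJetRelation.mul_eq_zero [IsAlgClosed K] (hκ : IsJetRelation d w κ) (hw : 2 ≤ w)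
    (hlt : 2 * w + 1 + κ.support.card < 3 * d) :
    ∀ a ∈ κ.support, a.rep 1 * a.rep 2 = 0 := by
  classical
  obtain ⟨α, β, hres⟩ := hκ.exists_forall_add_sum_eq_zero
  set s := ((κ.erase (coordPoint 0)).erase (coordPoint 2)).support with hs
  have hmem {a : Pm K 2} : a ∈ s ↔ a ≠ coordPoint 2 ∧ a ≠ coordPoint 0 ∧ a ∈ κ.support := by
    simp only [hs, Finsupp.support_erase, Finset.mem_erase]
  have hP := pairwise_linearIndependent_coordPointsRep (x := fun a : s ↦ a.1)
    Subtype.val_injective (fun a ↦ (hmem.mp a.2).2.1) fun a ↦ (hmem.mp a.2).1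
  have hy : LinearIndependent K ![coordPointsRep (fun a : s ↦ a.1) none, Pi.single 1 1] :=
    linearIndependent_single_single zero_ne_one
  have hA : ∀ c, (JetScheme.twoJetsWeight w (w - 1) α β (fun a : s ↦ κ a) c).coeff 0 ≠ 0 :=
    JetScheme.coeff_zero_twoJetsWeight_ne_zero (by lia) (by lia) α β
      fun a ↦ Finsupp.mem_support_iff.mp (hmem.mp a.2).2.2
  have hcard : s.card ≤ κ.support.card := Finset.card_le_card fun a ha ↦ (hmem.mp ha).2.2
  obtain ⟨q, hq, hq0, hqZ⟩ := JetScheme.exists_conic_of_length_lt (d := d)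
    (JetScheme.twoJets w (w - 1) _ _ hy hP) hA
    (fun f hf ↦ by rw [JetScheme.residue_twoJets]; exact hres f hf)
    (by rw [JetScheme.length_twoJets, Fintype.card_coe]; lia)
  rw [JetScheme.toCoordRing_eq_zero_iff] at hqZ
  obtain ⟨c, rfl⟩ := eq_C_mul_X_mul_X_of_X_pow_dvd hq
    ((pow_dvd_pow X (by lia : 3 ≤ w + 1)).trans (hqZ none))
    ((pow_dvd_pow X (by lia : 2 ≤ w - 1 + 1)).trans (hqZ (some none)))
  have hc : c ≠ 0 := by
    rintro rfl
    simp at hq0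
  intro a ha
  by_cases h0 : a = coordPoint 0
  · rw [h0, coordPoint_rep_apply (by decide), zero_mul]
  by_cases h2 : a = coordPoint 2
  · rw [h2, coordPoint_rep_apply (by decide), zero_mul]
  have hdvd : X ^ 1 ∣ lineRestrict a.rep (Pi.single 0 1) _ :=
    hqZ (some (some ⟨a, hmem.mpr ⟨h2, h0, ha⟩⟩))
  have heval := Polynomial.X_pow_dvd_iff.mp hdvd 0 zero_lt_one
  rw [coeff_zero_lineRestrict] at heval
  simpa [hc, or_comm] using heval

theorem IsJetRelation.two_mul_le_card_erase [IsAlgClosed K] [DecidableEq (Pm K 2)]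
    (hκ : IsJetRelation d w κ) (hw : 2 ≤ w) (hlt : 2 * w + 1 + κ.support.card < 3 * d) :
    2 * (d + 1 - w) ≤ (κ.support.erase (coordPoint 0)).card := by
  classical
  have hd : d ≠ 0 := by lia
  have h₁ := hκ.lt_add_card_filter_one hw hd
  have h₂ := hκ.lt_add_card_filter_two hw hd
  set S₁ := κ.support.filter fun a ↦ a.rep 1 ≠ 0
  set S₂ := κ.support.filter fun a ↦ a.rep 2 ≠ 0 ∧ a ≠ coordPoint 2
  have hdisj : Disjoint S₁ S₂ := Finset.disjoint_filter.mpr fun a ha ha1 ha2 ↦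
    mul_ne_zero ha1 ha2.1 (hκ.mul_eq_zero hw hlt a ha)
  have hsub : S₁ ∪ S₂ ⊆ κ.support.erase (coordPoint 0) := by
    intro a ha
    simp only [S₁, S₂, Finset.mem_union, Finset.mem_filter] at ha
    refine Finset.mem_erase.mpr ⟨?_, by tauto⟩
    rintro rfl
    simp [coordPoint_rep_apply (K := K) (i := 0) (j := 1) (by decide),
      coordPoint_rep_apply (K := K) (i := 0) (j := 2) (by decide)] at ha
  have hcard := Finset.card_le_card hsub
  rw [Finset.card_union_of_disjoint hdisj] at hcard
  lia

theorem HasRankLE.exists_isJetRelation [DecidableEq (Pm K 2)] {ι : Type*} [Fintype ι]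
    {x : ι → Fin 3 → K} {y : ι → Pm K 2} (hx : ∀ i, x i ≠ 0) (hxy : ∀ i, .mk K (x i) (hx i) = y i)
    (hy : Function.Injective y) {r : ℕ} (hr : HasRankLE (m := 2) r
      (twoJetFunctional d w (Pi.single 0 1) (Pi.single 1 1) (Pi.single 2 1) x)) :
    ∃ (T : Finset (Pm K 2)) (κ : Pm K 2 →₀ K), T.card ≤ r ∧ IsJetRelation d w κ ∧
      κ.support ⊆ T ∪ insert (coordPoint 0) (Finset.univ.image y) ∧
      ∀ i, y i ≠ coordPoint 0 → y i ∉ T → y i ∈ κ.support := by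
  classical
  obtain ⟨T, hT, hφ⟩ := hr
  obtain ⟨β, hβ, hβφ⟩ := (Finsupp.mem_span_image_iff_linearCombination K).mp hφ
  obtain ⟨c, hc, hO⟩ := exists_nu_coordPoint_rep_eq_smul (K := K) d 0
  choose ε hε hnu using fun i ↦ exists_nu_rep_mk_eq_smul (m := 2) d (hx i)
  simp_rw [hxy] at hnu
  let θ : Pm K 2 →₀ K := .single (coordPoint 0) c⁻¹ + ∑ i, .single (y i) (ε i)⁻¹
  have hθ : Finsupp.linearCombination K (fun a : Pm K 2 ↦ nu d a.rep) θ =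
      nu d (m := 2) (Pi.single 0 1) + ∑ i, nu d (x i) := by
    simp [θ, hO, hnu, smul_smul, hc, hε]
  have hβT : β.support ⊆ T := by exact_mod_cast hβ
  refine ⟨T, θ - β, hT, ?_, ?_, fun i hi hiT ↦ ?_⟩
  · rw [IsJetRelation, map_sub, hβφ, hθ, twoJetFunctional]
    abel
  · refine Finsupp.support_sub.trans (Finset.union_subset ?_ (hβT.trans Finset.subset_union_left))
    refine Finset.Subset.trans (Finsupp.support_add.trans (Finset.union_subset ?_ ?_))
      Finset.subset_union_right
    · exact Finsupp.support_single_subset.trans (by simp)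
    · refine Finsupp.support_finsetSum.trans (Finset.biUnion_subset.mpr fun i _ ↦ ?_)
      exact Finsupp.support_single_subset.trans (by simp)
  · have hβi : β (y i) = 0 := Finsupp.notMem_support_iff.mp fun h ↦ hiT (hβT h)
    simp [θ, hβi, Finsupp.single_apply, hi.symm, hy.eq_iff, hε]

theorem le_of_hasRankLE_twoJetFunctional_single [IsAlgClosed K] {ι : Type*} [Fintype ι] (hw : 2 ≤ w)
    (hd : 4 * w + 2 * Fintype.card ι + 1 ≤ d) {x : ι → Fin 3 → K} (h1 : ∀ i, x i 1 ≠ 0)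
    (h2 : ∀ i, x i 2 ≠ 0) (hx : Pairwise fun i j ↦ LinearIndependent K ![x i, x j]) {r : ℕ}
    (hr : HasRankLE (m := 2) r
      (twoJetFunctional d w (Pi.single 0 1) (Pi.single 1 1) (Pi.single 2 1) x)) :
    2 * (d + 1 - w) + Fintype.card ι ≤ r := by
  classical
  have hx0 (i) : x i ≠ 0 := fun h ↦ h1 i (by rw [h, Pi.zero_apply])
  set y := fun i ↦ Projectivization.mk K (x i) (hx0 i)
  have hy : Function.Injective y := fun i j hij ↦ by_contra fun hne ↦
    (linearIndependent_pair_iff_mk_ne (hx0 i) (hx0 j)).mp (hx hne) hij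
  have hmul (i) : (y i).rep 1 * (y i).rep 2 ≠ 0 := mul_ne_zero
    (mt (mk_rep_mem_iff (hx0 i) (W := LinearMap.ker (LinearMap.proj 1))).mp (h1 i))
    (mt (mk_rep_mem_iff (hx0 i) (W := LinearMap.ker (LinearMap.proj 2))).mp (h2 i))
  have hy0 (i) : y i ≠ coordPoint 0 := fun h ↦
    hmul i (by rw [h, coordPoint_rep_apply (by decide), zero_mul])
  obtain ⟨T, κ, hT, hκ, hsupp, hyT⟩ := hr.exists_isJetRelation hx0 (fun _ ↦ rfl) hy
  by_contra! hlt
  have hcard := (Finset.card_le_card hsupp).trans ((Finset.card_union_le _ _).trans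
    (Nat.add_le_add_left ((Finset.card_insert_le _ _).trans
      (Nat.succ_le_succ Finset.card_image_le)) _))
  rw [Finset.card_univ] at hcard
  have hlt' : 2 * w + 1 + κ.support.card < 3 * d := by lia
  have hzero := hκ.mul_eq_zero hw hlt'
  have hsub : κ.support.erase (coordPoint 0) ⊆ T \ Finset.univ.image y := by
    intro a ha
    obtain ⟨ha0, ha⟩ := Finset.mem_erase.mp ha
    have hay : a ∉ Finset.univ.image y := by
      simp only [Finset.mem_image, Finset.mem_univ, true_and, not_exists]
      rintro i rfl
      exact hmul i (hzero _ ha)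
    refine Finset.mem_sdiff.mpr ⟨(Finset.mem_union.mp (hsupp ha)).resolve_right ?_, hay⟩
    exact Finset.mem_insert.not.mpr (not_or.mpr ⟨ha0, hay⟩)
  have hyT' : Finset.univ.image y ⊆ T := by
    simp only [Finset.image_subset_iff, Finset.mem_univ, true_imp_iff]
    exact fun i ↦ by_contra fun h ↦ hmul i (hzero _ (hyT i (hy0 i) h))
  have hle := (hκ.two_mul_le_card_erase hw hlt').trans (Finset.card_le_card hsub)
  have hcard' := Finset.card_sdiff_add_card_eq_card hyT'
  rw [Finset.card_image_of_injective _ hy, Finset.card_univ] at hcard'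
  lia

end JetRelation

section Projection

variable {K : Type} [Field K] {m n d w : ℕ} {o y o' : Fin (m + 1) → K}

/-- Pulling back polynomials along a linear map. -/
def pullback (π : (Fin (m + 1) → K) →ₗ[K] (Fin (n + 1) → K)) : PR K n →ₐ[K] PR K m :=
  MvPolynomial.aeval fun i ↦ linearForm (LinearMap.proj i ∘ₗ π)

variable (π : (Fin (m + 1) → K) →ₗ[K] (Fin (n + 1) → K))

theorem lineRestrict_pullback (p q : Fin (m + 1) → K) (f : PR K n) :
    lineRestrict p q (pullback π f) = lineRestrict (π p) (π q) f := by
  have h : (lineRestrict p q).comp (pullback π) = lineRestrict (π p) (π q) := by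
    ext i
    simp [pullback, lineRestrict_X]
  exact DFunLike.congr_fun h f

theorem eval_pullback (p : Fin (m + 1) → K) (f : PR K n) :
    MvPolynomial.eval p (pullback π f) = MvPolynomial.eval (π p) f := by
  rw [← coeff_zero_lineRestrict p 0, lineRestrict_pullback, coeff_zero_lineRestrict]

/-- The pushforward of functionals on forms of degree `d` along a linear map. -/
def pushforward (d : ℕ) : Dual K (Hd K m d) →ₗ[K] Dual K (Hd K n d) :=
  ((pullback π).toLinearMap.restrict (p := Hd K n d) (q := Hd K m d) fun f hf ↦ by
    have hom := MvPolynomial.IsHomogeneous.aeval (n := 1) hf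
      (fun i ↦ linearForm (LinearMap.proj i ∘ₗ π)) fun _ ↦ isHomogeneous_linearForm _
    rwa [one_mul] at hom).dualMap

theorem pushforward_nu (v : Fin (m + 1) → K) : pushforward π d (nu d v) = nu d (π v) := by
  ext f
  rw [nu_apply, ← eval_pullback]
  exact nu_apply _ _

theorem pushforward_jetFunctional (p q : Fin (m + 1) → K) (i : ℕ) :
    pushforward π d (jetFunctional d p q i) = jetFunctional d (π p) (π q) i := by
  ext f
  rw [jetFunctional_apply, ← lineRestrict_pullback]
  rfl

theorem pushforward_twoJetFunctional {ι : Type*} [Fintype ι] (x : ι → Fin (m + 1) → K) :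
    pushforward π d (twoJetFunctional d w o y o' x) =
      twoJetFunctional d w (π o) (π y) (π o') fun i ↦ π (x i) := by
  simp only [twoJetFunctional, map_add, map_sum, pushforward_nu, pushforward_jetFunctional]

theorem HasRankLE.pushforward (hd : d ≠ 0) {r : ℕ} {φ : Dual K (Hd K m d)} (hφ : HasRankLE r φ) :
    HasRankLE r (pushforward π d φ) := by
  obtain ⟨T, hT, hφT⟩ := hφ
  obtain ⟨c, rfl⟩ := (Submodule.mem_span_image_finset_iff_exists_fun K).mp hφT
  simp only [map_sum, map_smul, pushforward_nu]
  obtain ⟨T', hT', hφ'⟩ := hasRankLE_sum_smul_nu hd Finset.univ c fun a ↦ π a.1.rep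
  exact ⟨T', hT'.trans (by simpa using hT), hφ'⟩

theorem le_of_hasRankLE_twoJetFunctional [IsAlgClosed K] {ι : Type*} [Fintype ι] (hw : 2 ≤ w)
    (hd : 4 * w + 2 * Fintype.card ι + 1 ≤ d) (hli : LinearIndependent K ![o, y, o'])
    {x : ι → Fin (m + 1) → K} (hx : ∀ i, x i ∈ Submodule.span K {o, y, o'})
    (hxD : ∀ i, x i ∉ Submodule.span K {o, y}) (hxR : ∀ i, x i ∉ Submodule.span K {o, o'})
    (hxx : Pairwise fun i j ↦ LinearIndependent K ![x i, x j]) {r : ℕ}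
    (hr : HasRankLE r (twoJetFunctional d w o y o' x)) : 2 * (d + 1 - w) + Fintype.card ι ≤ r := by
  obtain ⟨π, hπ⟩ := exists_linearMap_apply_eq hli fun i ↦ (Pi.single i 1 : Fin (2 + 1) → K)
  have hπo : π o = Pi.single 0 1 := hπ 0
  have hπy : π y = Pi.single 1 1 := hπ 1
  have hπo' : π o' = Pi.single 2 1 := hπ 2
  have hr' := hr.pushforward π (by lia)
  rw [pushforward_twoJetFunctional, hπo, hπy, hπo'] at hr'
  have hker : Disjoint (Submodule.span K {o, y, o'}) (LinearMap.ker π) := by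
    have h : LinearIndependent K (π ∘ ![o, y, o']) := by
      rw [show π ∘ ![o, y, o'] = Pi.basisFun K (Fin 3) from funext fun i ↦ by simpa using hπ i]
      exact (Pi.basisFun K _).linearIndependent
    have hrange : Set.range ![o, y, o'] = {o, y, o'} := by
      rw [Matrix.range_cons, Matrix.range_cons_cons_empty, Set.singleton_union]
    rw [← hrange]
    exact Submodule.range_ker_disjoint h
  refine le_of_hasRankLE_twoJetFunctional_single hw hd (fun i h ↦ hxR i ?_) (fun i h ↦ hxD i ?_)
    (fun i j hij ↦ ?_) hr'
  · obtain ⟨a, b, c, hi⟩ := Submodule.mem_span_triple.mp (hx i)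
    have hb : b = 0 := by simpa [← hi, hπo, hπy, hπo'] using h
    exact Submodule.mem_span_pair.mpr ⟨a, c, by simpa [hb] using hi⟩
  · obtain ⟨a, b, c, hi⟩ := Submodule.mem_span_triple.mp (hx i)
    have hc : c = 0 := by simpa [← hi, hπo, hπy, hπo'] using h
    exact Submodule.mem_span_pair.mpr ⟨a, b, by simpa [hc] using hi⟩
  · have h := (hxx hij).map (hker.mono_left (Submodule.span_le.mpr ?_))
    · have hcomp : π ∘ ![x i, x j] = ![π (x i), π (x j)] := by
        ext k : 1
        fin_cases k <;> rfl
      rwa [hcomp] at h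
    · rintro - ⟨k, rfl⟩
      fin_cases k
      exacts [hx i, hx j]

end Projection

section DivisorOnLine

open Polynomial (C X)

theorem exists_eq_span_X_pow_of_forall_root_eq_zero {K : Type*} [Field K] [IsAlgClosed K]
    {J : Ideal K[X]} (hJ : J ≠ ⊥) (hzero : ∀ t, (∀ u ∈ J, u.eval t = 0) → t = 0) :
    ∃ a, J = Ideal.span {X ^ a} := by
  obtain ⟨u, rfl⟩ := IsPrincipalIdealRing.principal J
  rw [Ideal.submodule_span_eq] at *
  have hu : u ≠ 0 := fun h ↦ hJ (by simp [h])
  have hroots : ∀ t ∈ u.roots, t = 0 := fun t ht ↦ hzero t fun v hv ↦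
    (Polynomial.isRoot_of_mem_roots ht).dvd (Ideal.mem_span_singleton.mp hv)
  refine ⟨u.roots.card, Ideal.span_singleton_eq_span_singleton.mpr ?_⟩
  have hsplit := (IsAlgClosed.splits u).eq_prod_roots
  rw [Multiset.eq_replicate_card.mpr hroots, Multiset.map_replicate, Multiset.prod_replicate,
    map_zero, sub_zero] at hsplit
  exact (Associated.of_eq hsplit).trans <| associated_unit_mul_left _ _ <|
    Polynomial.isUnit_C.mpr (Polynomial.leadingCoeff_ne_zero.mpr hu).isUnit

variable {K : Type} [Field K] {m : ℕ} {I : Ideal (PR K m)} {o y : Fin (m + 1) → K}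

theorem exists_isHomogeneous_eval_ne_zero (hI : IsHomogI I) {ho : o ≠ 0}
    (hlocus : pzeroLocus I ⊆ {Projectivization.mk K o ho}) {v : Fin (m + 1) → K}
    (hov : LinearIndependent K ![o, v]) :
    ∃ n, ∃ f ∈ I, f.IsHomogeneous n ∧ MvPolynomial.eval v f ≠ 0 := by
  have hv := hov.ne_zero 1
  have hmem : Projectivization.mk K v hv ∉ pzeroLocus I := fun hmem ↦
    (linearIndependent_pair_iff_mk_ne ho hv).mp hov (hlocus hmem).symm
  contrapose! hmem
  intro f hf n
  obtain ⟨c, hc⟩ := Projectivization.exists_smul_eq_mk_rep K v hv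
  have hn := MvPolynomial.homogeneousComponent_isHomogeneous n f
  rw [← hc, Units.smul_def, eval_smul_of_isHomogeneous hn, hmem n _ (hI f hf n) hn, mul_zero]

theorem exists_isHomogeneous_lineRestrict_eq (hI : IsHomogI I)
    (hoy : LinearIndependent K ![o, y]) {f : PR K m} (hf : f ∈ I) :
    ∃ n, ∃ g ∈ I, g.IsHomogeneous n ∧ lineRestrict o y g = lineRestrict o y f := by
  choose F hF hF1 using fun n ↦ exists_form_lineRestrict_eq (u := (1 : K[X])) (n := n) hoy
    (by simp)
  refine ⟨f.totalDegree, ∑ n ∈ Finset.range (f.totalDegree + 1),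
    F (f.totalDegree - n) * MvPolynomial.homogeneousComponent n f, ?_, ?_, ?_⟩
  · exact Ideal.sum_mem _ fun n _ ↦ Ideal.mul_mem_left _ _ (hI f hf n)
  · refine MvPolynomial.IsHomogeneous.sum _ _ _ fun n hn ↦ ?_
    have h := (hF (f.totalDegree - n)).mul
      (MvPolynomial.homogeneousComponent_isHomogeneous n f)
    rwa [Nat.sub_add_cancel (Nat.lt_succ_iff.mp (Finset.mem_range.mp hn))] at h
  · conv_rhs => rw [← MvPolynomial.sum_homogeneousComponent f]
    simp only [map_sum, map_mul, hF1, one_mul]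

theorem exists_map_lineRestrict_eq_span_X_pow [IsAlgClosed K] (hI : IsHomogI I)
    (hoy : LinearIndependent K ![o, y]) {ho : o ≠ 0}
    (hlocus : pzeroLocus I ⊆ {Projectivization.mk K o ho}) :
    ∃ a, I.map (lineRestrict o y) = Ideal.span {X ^ a} := by
  refine exists_eq_span_X_pow_of_forall_root_eq_zero (fun hbot ↦ ?_) fun t ht ↦ ?_
  · obtain ⟨n, f, hf, hfn, hfy⟩ := exists_isHomogeneous_eval_ne_zero hI hlocus hoy
    rw [← coeff_lineRestrict_top o y hfn] at hfy
    have h0 : lineRestrict o y f ∈ I.map (lineRestrict o y) := Ideal.mem_map_of_mem _ hf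
    rw [hbot, Ideal.mem_bot] at h0
    simp [h0] at hfy
  · by_contra ht0
    have hot : LinearIndependent K ![o, o + t • y] := by
      simpa using (LinearIndependent.pair_add_smul_add_smul_iff 1 0 1 t).mpr
        ⟨hoy, by simpa using ht0⟩
    obtain ⟨n, f, hf, -, hfy⟩ := exists_isHomogeneous_eval_ne_zero hI hlocus hot
    rw [← eval_lineRestrict] at hfy
    exact hfy (ht _ (Ideal.mem_map_of_mem _ hf))

theorem hilbQ_le_of_X_pow_dvd_imp_mem {a t : ℕ} (h : ∀ f : PR K m, f.IsHomogeneous t →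
    X ^ a ∣ lineRestrict o y f → f ∈ I) : hilbQ I t ≤ a := by
  let Ψ : Hd K m t →ₗ[K] (Fin a → K) := LinearMap.pi fun j ↦
    Polynomial.lcoeff K j ∘ₗ (lineRestrict o y).toLinearMap ∘ₗ (Hd K m t).subtype
  let Φ : Hd K m t →ₗ[K] (PR K m ⧸ I) :=
    (Ideal.Quotient.mkₐ K I).toLinearMap ∘ₗ (Hd K m t).subtype
  have hker : LinearMap.ker Ψ ≤ LinearMap.ker Φ := fun f hf ↦
    Ideal.Quotient.eq_zero_iff_mem.mpr <| h f f.2 <| Polynomial.X_pow_dvd_iff.mpr fun j hj ↦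
      congrFun hf ⟨j, hj⟩
  have hrank : hilbQ I t = finrank K (LinearMap.range Φ) := by
    rw [hilbQ, LinearMap.range_comp, Submodule.range_subtype]
  have hΦ := LinearMap.finrank_range_add_finrank_ker Φ
  have hΨ := LinearMap.finrank_range_add_finrank_ker Ψ
  have hle := Submodule.finrank_mono hker
  have ha : finrank K (LinearMap.range Ψ) ≤ a := by simpa using (LinearMap.range Ψ).finrank_le
  lia

theorem mem_of_lineRestrict_eq
    (hline : idealOfSet {p : Pm K m | p.submodule ≤ Submodule.span K {o, y}} ≤ I)
    {t : ℕ} {f g : PR K m} (hf : f.IsHomogeneous t) (hg : g.IsHomogeneous t) (hgI : g ∈ I)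
    (hfg : lineRestrict o y f = lineRestrict o y g) : f ∈ I := by
  rw [← sub_add_cancel f g]
  refine I.add_mem (hline (Ideal.subset_span ⟨⟨t, hf.sub hg⟩, fun p hp ↦ ?_⟩)) hgI
  refine eval_eq_zero_of_lineRestrict_eq_zero (hf.sub hg) (by rw [map_sub, hfg, sub_self]) (hp ?_)
  rw [Projectivization.submodule_eq]
  exact Submodule.mem_span_singleton_self _

theorem mem_of_X_pow_dvd_lineRestrict (hoy : LinearIndependent K ![o, y])
    (hline : idealOfSet {p : Pm K m | p.submodule ≤ Submodule.span K {o, y}} ≤ I)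
    {N M a t : ℕ} {g h f : PR K m} (hg : g.IsHomogeneous N) (hgI : g ∈ I)
    (hgy : MvPolynomial.eval y g ≠ 0) (hga : X ^ a ∣ lineRestrict o y g)
    (hh : h.IsHomogeneous M) (hhI : h ∈ I) (hha : lineRestrict o y h = X ^ a) (ht : N + M ≤ t)
    (hf : f.IsHomogeneous t) (hfa : X ^ a ∣ lineRestrict o y f) : f ∈ I := by
  have hdeg : (lineRestrict o y g).natDegree = N :=
    (natDegree_lineRestrict_le o y hg).antisymm <| Polynomial.le_natDegree_of_ne_zero <| by
      rwa [coeff_lineRestrict_top o y hg]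
  obtain ⟨u, hu⟩ := (EuclideanDomain.dvd_mod_iff hga).mpr hfa
  have hg0 : lineRestrict o y g ≠ 0 := fun h0 ↦ hgy <| by
    rw [← coeff_lineRestrict_top o y hg, h0, Polynomial.coeff_zero]
  have hu_deg : u.natDegree ≤ t - M := by
    have hmod := Polynomial.natDegree_le_natDegree
      (Polynomial.degree_mod_lt (lineRestrict o y f) hg0).le
    rcases eq_or_ne u 0 with rfl | hu0
    · simp
    · rw [hu, Polynomial.natDegree_X_pow_mul a hu0, hdeg] at hmod
      lia
  have hq_deg : (lineRestrict o y f / lineRestrict o y g).natDegree ≤ t - N := by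
    rw [Polynomial.div_def, Polynomial.natDegree_C_mul (by simpa),
      Polynomial.natDegree_divByMonic _ (Polynomial.monic_mul_leadingCoeff_inv hg0),
      Polynomial.natDegree_mul_leadingCoeff_inv _ hg0, hdeg]
    exact Nat.sub_le_sub_right (natDegree_lineRestrict_le o y hf) N
  obtain ⟨U, hU, hUu⟩ := exists_form_lineRestrict_eq hoy hu_deg
  obtain ⟨Q, hQ, hQq⟩ := exists_form_lineRestrict_eq hoy hq_deg
  have hgQ := hg.mul hQ
  have hhU := hh.mul hU
  rw [Nat.add_sub_cancel' (by lia)] at hgQ hhU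
  refine mem_of_lineRestrict_eq hline hf (hgQ.add hhU)
    (I.add_mem (I.mul_mem_right _ hgI) (I.mul_mem_right _ hhI)) ?_
  rw [map_add, map_mul, map_mul, hQq, hUu, hha, ← hu, EuclideanDomain.div_add_mod]

theorem X_pow_idealDeg_dvd_lineRestrict [IsAlgClosed K] (hI : IsHomogI I)
    (hoy : LinearIndependent K ![o, y]) {ho : o ≠ 0}
    (hline : idealOfSet {p : Pm K m | p.submodule ≤ Submodule.span K {o, y}} ≤ I)
    (hlocus : pzeroLocus I ⊆ {Projectivization.mk K o ho}) {f : PR K m} (hf : f ∈ I) :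
    X ^ idealDeg I ∣ lineRestrict o y f := by
  obtain ⟨a, ha⟩ := exists_map_lineRestrict_eq_span_X_pow hI hoy hlocus
  have hdvd : ∀ f ∈ I, X ^ a ∣ lineRestrict o y f := fun f hf ↦ by
    rw [← Ideal.mem_span_singleton, ← ha]
    exact Ideal.mem_map_of_mem _ hf
  refine (pow_dvd_pow _ ?_).trans (hdvd f hf)
  obtain ⟨N, g, hgI, hg, hgy⟩ := exists_isHomogeneous_eval_ne_zero hI hlocus hoy
  have hsurj : Function.Surjective (lineRestrict o y) := fun u ↦
    (exists_form_lineRestrict_eq hoy u.natDegree.le_refl).imp fun _ ↦ And.right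
  obtain ⟨h₀, hh₀I, hh₀⟩ := (Ideal.mem_map_iff_of_surjective _ hsurj).mp
    (ha ▸ Ideal.mem_span_singleton_self (X ^ a))
  obtain ⟨M, h, hhI, hh, hhh₀⟩ := exists_isHomogeneous_lineRestrict_eq hI hoy hh₀I
  refine Filter.limsup_le_of_le (by isBoundedDefault) ?_
  filter_upwards [Filter.eventually_ge_atTop (N + M)] with t ht
  exact hilbQ_le_of_X_pow_dvd_imp_mem fun f ↦ mem_of_X_pow_dvd_lineRestrict hoy hline hg hgI hgy
    (hdvd g hgI) hh hhI (hhh₀.trans hh₀) ht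

end DivisorOnLine

section Ranks

open Polynomial (X)

variable {K : Type} [Field K] [IsAlgClosed K] {ι : Type*} [Fintype ι] {m d w : ℕ}
  {o y o' : Fin (m + 1) → K} {x : ι → Fin (m + 1) → K}

theorem twoJetFunctional_ne_zero (hw : 2 ≤ w) (hd : 4 * w + 2 * Fintype.card ι + 1 ≤ d)
    (hli : LinearIndependent K ![o, y, o']) (hx : ∀ i, x i ∈ Submodule.span K {o, y, o'})
    (hxD : ∀ i, x i ∉ Submodule.span K {o, y}) (hxR : ∀ i, x i ∉ Submodule.span K {o, o'})
    (hxx : Pairwise fun i j ↦ LinearIndependent K ![x i, x j]) :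
    twoJetFunctional d w o y o' x ≠ 0 := fun h0 ↦ by
  have h : HasRankLE 0 (twoJetFunctional d w o y o' x) :=
    h0 ▸ ⟨∅, Finset.card_empty.le, zero_mem _⟩
  have := le_of_hasRankLE_twoJetFunctional hw hd hli hx hxD hxR hxx h
  lia

theorem srank_mk_twoJetFunctional [CharZero K] (hw : 2 ≤ w)
    (hd : 4 * w + 2 * Fintype.card ι + 1 ≤ d) (hli : LinearIndependent K ![o, y, o'])
    (hx : ∀ i, x i ∈ Submodule.span K {o, y, o'}) (hxD : ∀ i, x i ∉ Submodule.span K {o, y})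
    (hxR : ∀ i, x i ∉ Submodule.span K {o, o'})
    (hxx : Pairwise fun i j ↦ LinearIndependent K ![x i, x j])
    (h0 : twoJetFunctional d w o y o' x ≠ 0) :
    srank d (Projectivization.mk K _ h0) = 2 * (d + 1 - w) + Fintype.card ι := by
  have := NeZero.mk (show d + 1 - w ≠ 0 by lia)
  obtain ⟨ω, hω⟩ := HasEnoughRootsOfUnity.exists_primitiveRoot K (d + 1 - w)
  exact srank_mk_eq h0 (hasRankLE_twoJetFunctional hω (by lia) (by lia)) fun r ↦
    le_of_hasRankLE_twoJetFunctional hw hd hli hx hxD hxR hxx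

end Ranks

section Configuration

open Polynomial (X)

variable {K : Type} [Field K] {m k d w : ℕ} {o y o' : Fin (m + 1) → K}

theorem rep_mem_iff_submodule_le {V : Type*} [AddCommGroup V] [Module K V] {a : ℙ K V}
    {W : Submodule K V} : a.rep ∈ W ↔ a.submodule ≤ W := by
  rw [Projectivization.submodule_eq, Submodule.span_singleton_le_iff_mem]

theorem eval_rep_eq_zero_of_mem_idealOfSet {S : Set (Pm K m)} {f : PR K m} (hf : f ∈ idealOfSet S)
    {a : Pm K m} (ha : a ∈ S) : MvPolynomial.eval a.rep f = 0 :=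
  (Ideal.span_le (I := RingHom.ker (MvPolynomial.eval a.rep))).mpr (fun _ hg ↦ hg.2 a ha) hf

theorem span_pair_eq_of_finrank_eq_two {V : Type*} [AddCommGroup V] [Module K V]
    {W : Submodule K V} (hW : finrank K W = 2) {x y : V} (hx : x ∈ W) (hy : y ∈ W)
    (hxy : LinearIndependent K ![x, y]) : Submodule.span K {x, y} = W := by
  have := Module.finite_of_finrank_eq_succ hW
  refine Submodule.eq_of_le_of_finrank_eq (Submodule.span_le.mpr (Set.pair_subset hx hy)) ?_
  rw [hW, ← Matrix.range_cons_cons_empty, finrank_span_eq_card hxy, Fintype.card_fin]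

theorem linearIndependent_triple_iff {V : Type*} [AddCommGroup V] [Module K V] {x y z : V} :
    LinearIndependent K ![x, y, z] ↔
      LinearIndependent K ![x, y] ∧ z ∉ Submodule.span K {x, y} := by
  have hinit : Fin.init ![x, y, z] = ![x, y] := by
    ext i : 1
    fin_cases i <;> rfl
  rw [linearIndependent_finSucc', hinit, Matrix.range_cons_cons_empty]
  rfl

theorem exists_frame {WD WR : Submodule K (Fin (m + 1) → K)} (hWD : finrank K WD = 2)
    (hWR : finrank K WR = 2) {O O' : Pm K m}
    (hO : {a : Pm K m | a.submodule ≤ WD} ∩ {a : Pm K m | a.submodule ≤ WR} = {O})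
    (hO'R : O'.submodule ≤ WR) (hO'O : O' ≠ O) :
    ∃ y, LinearIndependent K ![O.rep, y, O'.rep] ∧ Submodule.span K {O.rep, y} = WD ∧
      Submodule.span K {O.rep, O'.rep} = WR := by
  obtain ⟨hOD, hOR⟩ : O ∈ {a : Pm K m | a.submodule ≤ WD} ∩ {a : Pm K m | a.submodule ≤ WR} :=
    hO ▸ rfl
  obtain ⟨y, hy, hOy⟩ := exists_mem_linearIndependent_pair (by lia : 1 < finrank K WD)
    (rep_mem_iff_submodule_le.mpr hOD) O.rep_nonzero
  have hD := span_pair_eq_of_finrank_eq_two hWD (rep_mem_iff_submodule_le.mpr hOD) hy hOy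
  have hR := span_pair_eq_of_finrank_eq_two hWR (rep_mem_iff_submodule_le.mpr hOR)
    (rep_mem_iff_submodule_le.mpr hO'R) (linearIndependent_rep_pair hO'O.symm)
  have hO'D : O'.rep ∉ WD := fun h ↦
    hO'O (hO.subset ⟨rep_mem_iff_submodule_le.mp h, hO'R⟩)
  exact ⟨y, linearIndependent_triple_iff.mpr ⟨hOy, hD ▸ hO'D⟩, hD, hR⟩

theorem GenerallyOn.mono {W : Submodule K (Fin (m + 1) → K)} {Φ Ψ : (Fin k → Pm K m) → Prop}
    (hΦ : GenerallyOn W k Φ) (h : ∀ e, Φ e → Ψ e) : GenerallyOn W k Ψ := by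
  obtain ⟨v, hv, F, hF, hFΦ⟩ := hΦ
  exact ⟨v, hv, F, hF, fun c hc e he ↦ h e (hFΦ c hc e he)⟩

theorem generallyOn_notMem (hli : LinearIndependent K ![o, y, o']) (k : ℕ) :
    GenerallyOn (Submodule.span K {o, y, o'}) k fun e ↦ ∀ i,
      (e i).rep ∈ Submodule.span K {o, y, o'} ∧ (e i).rep ∉ Submodule.span K {o, y} ∧
        (e i).rep ∉ Submodule.span K {o, o'} := by
  have hmem : ∀ j, ![o, y, o'] j ∈ Submodule.span K {o, y, o'} := fun j ↦
    Submodule.subset_span (by fin_cases j <;> simp)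
  refine ⟨fun j ↦ ⟨![o, y, o'] j, hmem j⟩, ?_,
    ∏ i, (MvPolynomial.X (i, 1) * MvPolynomial.X (i, 2)), ?_, fun c hc e he i ↦ ?_⟩
  · change Submodule.span K (Set.range ![o, y, o']) = _
    rw [Matrix.range_cons, Matrix.range_cons_cons_empty, Set.singleton_union]
  · exact Finset.prod_ne_zero_iff.mpr fun i _ ↦
      mul_ne_zero (MvPolynomial.X_ne_zero _) (MvPolynomial.X_ne_zero _)
  have hmem_iff (V : Submodule K (Fin (m + 1) → K)) :
      (e i).rep ∈ V ↔ ∑ j, c i j • ![o, y, o'] j ∈ V := by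
    rw [rep_mem_iff_submodule_le, he, Submodule.span_singleton_le_iff_mem]
  have hnotMem {p q : Fin (m + 1) → K} {j : Fin 3} (hj : c i j ≠ 0) {χ : Dual K (Fin (m + 1) → K)}
      (hχ : ∀ j', χ (![o, y, o'] j') = (Pi.single j 1 : Fin 3 → K) j') (hp : χ p = 0)
      (hq : χ q = 0) : (e i).rep ∉ Submodule.span K {p, q} := fun h ↦ hj <| by
    have hle : Submodule.span K {p, q} ≤ LinearMap.ker χ :=
      Submodule.span_le.mpr (Set.pair_subset hp hq)
    simpa [hχ, Pi.single_apply] using hle ((hmem_iff _).mp h)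
  simp only [map_prod, map_mul, MvPolynomial.eval_X, Finset.prod_ne_zero_iff, mul_ne_zero_iff] at hc
  obtain ⟨χ, hχ⟩ := exists_linearMap_apply_eq hli (Pi.single 1 1 : Fin 3 → K)
  obtain ⟨ψ, hψ⟩ := exists_linearMap_apply_eq hli (Pi.single 2 1 : Fin 3 → K)
  exact ⟨(hmem_iff _).mpr (Submodule.sum_smul_mem _ _ fun j _ ↦ hmem j),
    hnotMem (hc i (Finset.mem_univ i)).2 hψ (hψ 0) (hψ 1),
    hnotMem (hc i (Finset.mem_univ i)).1 hχ (hχ 0) (hχ 2)⟩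

theorem inSpanI_mk_iff {I : Ideal (PR K m)} {φ : Dual K (Hd K m d)} (hφ : φ ≠ 0) :
    inSpanI I d (Projectivization.mk K φ hφ) ↔ φ ∈ schemeSpanSub I d :=
  mk_rep_mem_iff hφ

theorem twoJetFunctional_mem_schemeSpanSub {ι : Type*} [Fintype ι] {I J : Ideal (PR K m)}
    (hI : ∀ f ∈ I, X ^ (w + 1) ∣ lineRestrict o y f) (hJ : ∀ f ∈ J, X ^ w ∣ lineRestrict o' o f)
    (hw : w ≠ 0) (e : ι → Pm K m) :
    twoJetFunctional d w o y o' (fun i ↦ (e i).rep) ∈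
      schemeSpanSub (I ⊓ J ⊓ idealOfSet (Set.range e)) d := by
  rintro f ⟨⟨hfI, hfJ⟩, hfe⟩
  have hI' := Polynomial.X_pow_dvd_iff.mp (hI f hfI)
  have ho := hI' 0 (by lia)
  rw [coeff_zero_lineRestrict] at ho
  have hx : ∀ i, MvPolynomial.eval (e i).rep (f : PR K m) = 0 := fun i ↦
    eval_rep_eq_zero_of_mem_idealOfSet hfe (Set.mem_range_self i)
  simp only [twoJetFunctional, LinearMap.add_apply, LinearMap.sum_apply, jetFunctional_apply,
    nu_apply, hI' w (by lia), Polynomial.X_pow_dvd_iff.mp (hJ f hfJ) (w - 1) (by lia), ho, hx,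
    Finset.sum_const_zero, add_zero]

theorem span_pair_sup_span_pair {V : Type*} [AddCommGroup V] [Module K V] (a b c : V) :
    Submodule.span K {a, b} ⊔ Submodule.span K {a, c} = Submodule.span K {a, b, c} := by
  rw [← Submodule.span_union]
  congr 1
  ext z
  simp only [Set.mem_union, Set.mem_insert_iff, Set.mem_singleton_iff]
  tauto

theorem brank_srank_mk_twoJetFunctional [IsAlgClosed K] [CharZero K] {ι : Type*} [Fintype ι]
    (hw : 2 ≤ w) (hd : 4 * w + 2 * Fintype.card ι + 1 ≤ d) {O O' : Pm K m}
    {y : Fin (m + 1) → K} (hli : LinearIndependent K ![O.rep, y, O'.rep]) {e : ι → Pm K m}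
    (he : Function.Injective e)
    (hx : ∀ i, (e i).rep ∈ Submodule.span K {O.rep, y, O'.rep} ∧
      (e i).rep ∉ Submodule.span K {O.rep, y} ∧ (e i).rep ∉ Submodule.span K {O.rep, O'.rep}) :
    ∃ h0 : twoJetFunctional d w O.rep y O'.rep (fun i ↦ (e i).rep) ≠ 0,
      brank d (.mk K _ h0) = 2 * w + 1 + Fintype.card ι ∧
      srank d (.mk K _ h0) = 2 * (d + 1 - w) + Fintype.card ι := by
  choose hx hxD hxR using hx
  have hxx : Pairwise fun i j ↦ LinearIndependent K ![(e i).rep, (e j).rep] := fun i j hij ↦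
    linearIndependent_rep_pair (he.ne hij)
  have h0 := twoJetFunctional_ne_zero hw hd hli hx hxD hxR hxx
  have hne (i : ι) : O ≠ e i ∧ O' ≠ e i := by
    constructor <;>
    · rintro rfl
      exact hxR i (Submodule.subset_span (by simp))
  have hOO' : O ≠ O' := fun h ↦
    absurd (hli.injective (a₁ := 0) (a₂ := 2) (congrArg Projectivization.rep h)) (by decide)
  let Q : Option (Option ι) → Pm K m := fun c ↦ c.elim O fun c ↦ c.elim O' e
  have hQ : Function.Injective Q := by
    rintro (_ | _ | i) (_ | _ | j) h
    exacts [rfl, absurd h hOO', absurd h (hne j).1, absurd h.symm hOO', rfl, absurd h (hne j).2,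
      absurd h.symm (hne i).1, absurd h.symm (hne i).2, congrArg (some ∘ some) (he h)]
  exact ⟨h0, brank_mk_twoJetFunctional hw hd (P := fun c ↦ (Q c).rep)
    (linearIndependent_triple_iff.mp hli).1 (fun c c' h ↦ linearIndependent_rep_pair (hQ.ne h)) h0,
    srank_mk_twoJetFunctional hw hd hli hx hxD hxR hxx h0⟩

end Configuration

end

/-- Lemma 9 (`o4`): with `w ≥ 2`, `s ≥ 2w+1`, `d ≥ 2s-1`, distinct coplanar lines `D, R`
meeting at `O` spanning the plane `U`, `A₁ ⊂ D` the degree-`(w+1)` divisor supported at `O`,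
`A₂ ⊂ R` the degree-`w` divisor supported at `O' ∈ R ∖ {O}`, and a general subset `E ⊂ U`
of cardinality `s - 2w - 1`: there is `P ∈ ⟨ν_d(A₁ ∪ A₂ ∪ E)⟩` with `br(P) = s` and
`sr(P) = 2d+1+s-4w`. -/
theorem stmt11 (K : Type) [Field K] [IsAlgClosed K] [CharZero K]
    (m w s d : ℕ) (hm : 2 ≤ m) (hw : 2 ≤ w) (hs : 2 * w + 1 ≤ s) (hd : 2 * s ≤ d + 1)
    (WD WR : Submodule K (Fin (m+1) → K))
    (hWD : Module.finrank K WD = 2) (hWR : Module.finrank K WR = 2) (hDR : WD ≠ WR)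
    (O : Pm K m)
    (hO : {a : Pm K m | a.submodule ≤ WD} ∩ {a : Pm K m | a.submodule ≤ WR} = {O})
    (A1 : PSub K m) (hA1D : idealOfSet {a : Pm K m | a.submodule ≤ WD} ≤ A1.I)
    (hA1z : IsZeroDimI A1.I) (hA1deg : idealDeg A1.I = w + 1) (hA1sup : pzeroLocus A1.I = {O})
    (O' : Pm K m) (hO'R : O'.submodule ≤ WR) (hO'O : O' ≠ O)
    (A2 : PSub K m) (hA2R : idealOfSet {a : Pm K m | a.submodule ≤ WR} ≤ A2.I)
    (hA2z : IsZeroDimI A2.I) (hA2deg : idealDeg A2.I = w) (hA2sup : pzeroLocus A2.I = {O'}) :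
    GenerallyOn (WD ⊔ WR) (s - (2 * w + 1)) (fun e =>
      Function.Injective e →
        ∃ P : PN K m d,
          inSpanI (A1.I ⊓ A2.I ⊓ idealOfSet (Set.range e)) d P ∧
          brank d P = s ∧ srank d P + 4 * w = 2 * d + 1 + s) := by
  obtain ⟨y, hli, rfl, rfl⟩ := exists_frame hWD hWR hO hO'R hO'O
  have hOy := (linearIndependent_triple_iff.mp hli).1
  rw [span_pair_sup_span_pair]
  refine (generallyOn_notMem hli _).mono fun e he hinj ↦ ?_
  obtain ⟨h0, hbr, hsr⟩ := brank_srank_mk_twoJetFunctional (d := d) hw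
    (by rw [Fintype.card_fin]; lia) hli hinj he
  rw [Fintype.card_fin] at hbr hsr
  refine ⟨_, (inSpanI_mk_iff h0).mpr (twoJetFunctional_mem_schemeSpanSub ?_ ?_ (by lia) e),
    by lia, by lia⟩
  · intro f hf
    rw [← hA1deg]
    exact X_pow_idealDeg_dvd_lineRestrict A1.homog hOy hA1D (by rw [hA1sup, O.mk_rep]) hf
  · intro f hf
    rw [← hA2deg]
    exact X_pow_idealDeg_dvd_lineRestrict A2.homog (linearIndependent_rep_pair hO'O)
      (Set.pair_comm O.rep O'.rep ▸ hA2R) (by rw [hA2sup, O'.mk_rep]) hf
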